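/- arXiv:1608.06596 — 4 statements merged into one kernel-verified Lean document; each statement's English description precedes it below -/
import Mathlib

section
/- For every number of qudits n ≥ 1, prime p, and every k ≥ 1, the set C^k_d of diagonal gates in the k-th level of the Clifford hierarchy is a group: it contains the identity, is closed under multiplication, and is closed under taking inverses (adjoints). -/
/-!
Conjugating a Pauli `P` by a diagonal unitary `U` multiplies it by a diagonal matrix: the group
commutator `U P U† P†` is the product of `U` with `P U† P†`, and the latter is diagonal because
Paulis are permutation matrices up to phases (`pauliN_conj_isDiag`). Every level of the hierarchy
is stable under right multiplication by Paulis (`cliffN_mul_pauliN`), so a diagonal unitary `U`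
lies in level `k + 1` exactly when all the commutators `[U, P] = U P U† P†` lie in the diagonal
part of level `k` (`mem_cliffDN_succ_iff`). Since diagonal matrices commute,
`[U V, P] = [V, P] [U, P]` and `[U†, P] = [U, P]†`, and the group property follows by induction on
the level, starting from the group of Paulis with arbitrary phases.
-/

open Matrix Complex

/-- Shift gate `X` acting on the `i`-th of `n` qudits: `X(e_i)|j⟩ = |j + e_i⟩`. -/
noncomputable def XmatN (p n : ℕ) [NeZero p] (i : Fin n) :
    Matrix (Fin n → ZMod p) (Fin n → ZMod p) ℂ :=
  Matrix.of fun r c => if r = Function.update c i (c i + 1) then 1 else 0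

/-- Phase gate `Z` acting on the `i`-th of `n` qudits: `Z(e_i)|j⟩ = ω^{j_i}|j⟩`. -/
noncomputable def ZmatN (p n : ℕ) [NeZero p] (i : Fin n) :
    Matrix (Fin n → ZMod p) (Fin n → ZMod p) ℂ :=
  Matrix.of fun r c =>
    if r = c then Complex.exp (2 * Real.pi * Complex.I * (((c i).val : ℂ) / (p : ℂ))) else 0

/-- The phase of the Pauli group generators: `i` if `p = 2`, `ω = exp(2πi/p)` if `p > 2`. -/
noncomputable def pauliPhase (p : ℕ) : ℂ :=
  if p = 2 then Complex.I else Complex.exp (2 * Real.pi * Complex.I / (p : ℂ))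

/-- The `n`-qudit Pauli group `P_n = P^{⊗n}`, generated by the phase `iI` (`p = 2`) or
`ωI` (`p > 2`) together with `X` and `Z` acting on each qudit.  All generators have
finite order, so the monoid they generate is already a group. -/
noncomputable def PauliN (p n : ℕ) [NeZero p] :
    Set (Matrix (Fin n → ZMod p) (Fin n → ZMod p) ℂ) :=
  ↑(Submonoid.closure
      ({pauliPhase p • (1 : Matrix (Fin n → ZMod p) (Fin n → ZMod p) ℂ)} ∪
        (Set.range (XmatN p n)) ∪ (Set.range (ZmatN p n))))

/-- The Clifford hierarchy on `n` qudits: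
`C^1 = {e^{iφ} P : P ∈ P_n}`, and `C^k = {U unitary | U P U† ∈ C^{k-1} ∀ P ∈ P_n}` for `k ≥ 2`. -/
noncomputable def CliffN (p n : ℕ) [NeZero p] :
    ℕ → Set (Matrix (Fin n → ZMod p) (Fin n → ZMod p) ℂ)
  | 0 => ∅
  | 1 => {U | ∃ φ : ℝ, ∃ P ∈ PauliN p n, U = Complex.exp (φ * Complex.I) • P}
  | (k + 2) => {U | U ∈ Matrix.unitaryGroup (Fin n → ZMod p) ℂ ∧
      ∀ P ∈ PauliN p n, U * P * Uᴴ ∈ CliffN p n (k + 1)}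

/-- The diagonal gates in the `k`-th level of the `n`-qudit Clifford hierarchy. -/
noncomputable def CliffDN (p n : ℕ) [NeZero p] (k : ℕ) :
    Set (Matrix (Fin n → ZMod p) (Fin n → ZMod p) ℂ) :=
  {U | U ∈ CliffN p n k ∧ U.IsDiag}

/-! ### Permutation matrices and diagonal matrices -/

/-- The permutation matrix sending the basis vector `|c⟩` to `|e c⟩`. -/
noncomputable def basisPerm {ι : Type*} [DecidableEq ι] (e : Equiv.Perm ι) : Matrix ι ι ℂ :=
  Matrix.of fun r c => if r = e c then 1 else 0

section BasisPerm

variable {ι : Type*} [DecidableEq ι]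

lemma basisPerm_one : basisPerm (1 : Equiv.Perm ι) = 1 := by
  ext r c
  by_cases h : r = c <;> simp [basisPerm, Matrix.one_apply, h]

lemma basisPerm_conjTranspose (e : Equiv.Perm ι) : (basisPerm e)ᴴ = basisPerm e⁻¹ := by
  ext r c
  simp only [basisPerm, Matrix.conjTranspose_apply, Matrix.of_apply, Equiv.Perm.eq_inv_iff_eq]
  by_cases h : e r = c
  · simp [h]
  · simp [h, Ne.symm h]

variable [Fintype ι]

lemma basisPerm_mul (e f : Equiv.Perm ι) : basisPerm e * basisPerm f = basisPerm (e * f) := by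
  ext r c
  by_cases h : r = e (f c) <;> simp [basisPerm, Matrix.mul_apply, h]

lemma basisPerm_pow (e : Equiv.Perm ι) (m : ℕ) : basisPerm e ^ m = basisPerm (e ^ m) := by
  induction m with
  | zero => simp [basisPerm_one]
  | succ m ih => rw [pow_succ, ih, basisPerm_mul, pow_succ]

lemma basisPerm_conj_isDiag (e : Equiv.Perm ι) {D : Matrix ι ι ℂ} (hD : D.IsDiag) :
    (basisPerm e * D * (basisPerm e)ᴴ).IsDiag := by
  rw [← hD.diagonal_diag]
  have h : basisPerm e * diagonal D.diag = diagonal (fun i => D.diag (e⁻¹ i)) * basisPerm e := by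
    ext r c
    rw [Matrix.mul_diagonal, Matrix.diagonal_mul]
    by_cases hr : r = e c <;> simp [basisPerm, hr]
  rw [h, Matrix.mul_assoc, basisPerm_conjTranspose, basisPerm_mul, mul_inv_cancel,
    basisPerm_one, Matrix.mul_one]
  exact Matrix.isDiag_diagonal _

lemma isDiag_mul {A B : Matrix ι ι ℂ} (hA : A.IsDiag) (hB : B.IsDiag) : (A * B).IsDiag := by
  rw [← hA.diagonal_diag, ← hB.diagonal_diag, Matrix.diagonal_mul_diagonal]
  exact Matrix.isDiag_diagonal _

lemma isDiag_mul_comm {A B : Matrix ι ι ℂ} (hA : A.IsDiag) (hB : B.IsDiag) : A * B = B * A := by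
  rw [← hA.diagonal_diag, ← hB.diagonal_diag, Matrix.diagonal_mul_diagonal,
    Matrix.diagonal_mul_diagonal]
  simp only [mul_comm]

lemma conjTranspose_eq_pow {A : Matrix ι ι ℂ} {m : ℕ}
    (hA : Aᴴ * A = 1) (hm : m ≠ 0) (h : A ^ m = 1) : Aᴴ = A ^ (m - 1) := by
  obtain ⟨m, rfl⟩ := Nat.exists_eq_succ_of_ne_zero hm
  calc Aᴴ = Aᴴ * A ^ (m + 1) := by rw [h, Matrix.mul_one]
    _ = A ^ m := by rw [pow_succ', ← Matrix.mul_assoc, hA, Matrix.one_mul]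

end BasisPerm

/-! ### The Pauli group -/

section Pauli

variable {p n : ℕ} [NeZero p]

lemma XmatN_eq_basisPerm (i : Fin n) :
    XmatN p n i = basisPerm (Equiv.addRight (Pi.single i (1 : ZMod p))) := by
  ext r c
  have h : Function.update c i (c i + 1) = c + Pi.single i (1 : ZMod p) := by
    ext j
    by_cases hj : j = i
    · subst hj; simp
    · simp [hj]
  by_cases hr : r = c + Pi.single i (1 : ZMod p) <;> simp [XmatN, basisPerm, h, hr]

lemma ZmatN_eq_diagonal (i : Fin n) :
    ZmatN p n i = diagonal fun c : Fin n → ZMod p =>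
      Complex.exp (2 * Real.pi * Complex.I * (((c i).val : ℂ) / (p : ℂ))) := by
  ext r c
  by_cases h : r = c
  · subst h; simp [ZmatN]
  · simp [ZmatN, h]

lemma exp_two_pi_div_pow (a : ℕ) :
    Complex.exp (2 * Real.pi * Complex.I * ((a : ℂ) / (p : ℂ))) ^ p = 1 := by
  have hp : (p : ℂ) ≠ 0 := Nat.cast_ne_zero.mpr (NeZero.ne p)
  rw [← Complex.exp_nat_mul, Complex.exp_eq_one_iff]
  refine ⟨a, ?_⟩
  push_cast
  field_simp

lemma star_mul_self_of_pow_eq_one {z : ℂ} {m : ℕ} (hm : m ≠ 0) (h : z ^ m = 1) :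
    star z * z = 1 := by
  have hz : ‖z‖ = 1 := Complex.norm_eq_one_of_pow_eq_one h hm
  have := Complex.conj_mul' z
  rw [hz] at this
  simpa using this

lemma exists_pauliPhase_pow : ∃ m : ℕ, m ≠ 0 ∧ pauliPhase p ^ m = 1 := by
  unfold pauliPhase
  split_ifs
  · exact ⟨4, by norm_num, Complex.I_pow_four⟩
  · refine ⟨p, NeZero.ne p, ?_⟩
    have := exp_two_pi_div_pow (p := p) 1
    rwa [Nat.cast_one, mul_one_div] at this

lemma pauliN_mul {P Q : Matrix (Fin n → ZMod p) (Fin n → ZMod p) ℂ}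
    (hP : P ∈ PauliN p n) (hQ : Q ∈ PauliN p n) : P * Q ∈ PauliN p n :=
  Submonoid.mul_mem _ hP hQ

lemma pauliN_one : (1 : Matrix (Fin n → ZMod p) (Fin n → ZMod p) ℂ) ∈ PauliN p n :=
  Submonoid.one_mem _

/-- Elements of the Pauli group are unitary, have Pauli adjoints, and normalise the diagonal
matrices. Each property passes to products, so only the generators matter; these are unitaries of
finite order, so their adjoints are positive powers of them and lie in the generated monoid. -/
lemma pauliN_props {P : Matrix (Fin n → ZMod p) (Fin n → ZMod p) ℂ} (hP : P ∈ PauliN p n) :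
    Pᴴ * P = 1 ∧ Pᴴ ∈ PauliN p n ∧
      ∀ D : Matrix (Fin n → ZMod p) (Fin n → ZMod p) ℂ, D.IsDiag → (P * D * Pᴴ).IsDiag := by
  have key : ∀ A ∈ PauliN p n, Aᴴ * A = 1 → ∀ m : ℕ, m ≠ 0 → A ^ m = 1 → Aᴴ ∈ PauliN p n := by
    intro A hA h1 m hm h
    rw [conjTranspose_eq_pow h1 hm h]
    exact Submonoid.pow_mem _ hA _
  change P ∈ Submonoid.closure _ at hP
  induction hP using Submonoid.closure_induction with
  | mem A hA =>
    have hmem : A ∈ PauliN p n := Submonoid.subset_closure hA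
    rcases hA with (hA | ⟨i, rfl⟩) | ⟨i, rfl⟩
    · obtain rfl : A = pauliPhase p • 1 := hA
      obtain ⟨m, hm, h⟩ := exists_pauliPhase_pow (p := p)
      have h1 : (pauliPhase p • (1 : Matrix (Fin n → ZMod p) (Fin n → ZMod p) ℂ))ᴴ *
          (pauliPhase p • 1) = 1 := by
        rw [Matrix.conjTranspose_smul, Matrix.conjTranspose_one, smul_mul_smul_comm,
          star_mul_self_of_pow_eq_one hm h, one_smul, Matrix.one_mul]
      refine ⟨h1, key _ hmem h1 m hm (by rw [smul_pow, h, one_pow, one_smul]), fun D hD => ?_⟩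
      simp only [Matrix.conjTranspose_smul, Matrix.conjTranspose_one, Matrix.smul_mul,
        Matrix.mul_smul, Matrix.one_mul, Matrix.mul_one]
      exact (hD.smul _).smul _
    · rw [XmatN_eq_basisPerm] at hmem ⊢
      set e := Equiv.addRight (Pi.single i (1 : ZMod p) : Fin n → ZMod p)
      have h1 : (basisPerm e)ᴴ * basisPerm e = 1 := by
        rw [basisPerm_conjTranspose, basisPerm_mul, inv_mul_cancel, basisPerm_one]
      exact ⟨h1, key _ hmem h1 (orderOf e) (orderOf_pos e).ne'
        (by rw [basisPerm_pow, pow_orderOf_eq_one, basisPerm_one]),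
        fun D hD => basisPerm_conj_isDiag e hD⟩
    · have hd : (ZmatN p n i).IsDiag := by
        rw [ZmatN_eq_diagonal]
        exact Matrix.isDiag_diagonal _
      have h1 : (ZmatN p n i)ᴴ * ZmatN p n i = 1 := by
        rw [ZmatN_eq_diagonal, Matrix.diagonal_conjTranspose, Matrix.diagonal_mul_diagonal,
          ← Matrix.diagonal_one]
        congr 1
        ext c
        exact star_mul_self_of_pow_eq_one (NeZero.ne p) (exp_two_pi_div_pow _)
      refine ⟨h1, key _ hmem h1 p (NeZero.ne p) ?_, fun D hD =>
        isDiag_mul (isDiag_mul hd hD) hd.conjTranspose⟩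
      rw [ZmatN_eq_diagonal, Matrix.diagonal_pow, ← Matrix.diagonal_one]
      congr 1
      ext c
      exact exp_two_pi_div_pow _
  | one => exact ⟨by simp, by simpa using pauliN_one, fun D hD => by simpa using hD⟩
  | mul A B _ _ hA hB =>
    obtain ⟨hA1, hA2, hA3⟩ := hA
    obtain ⟨hB1, hB2, hB3⟩ := hB
    refine ⟨?_, ?_, fun D hD => ?_⟩
    · rw [Matrix.conjTranspose_mul, Matrix.mul_assoc, ← Matrix.mul_assoc Aᴴ, hA1, Matrix.one_mul,
        hB1]
    · rw [Matrix.conjTranspose_mul]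
      exact pauliN_mul hB2 hA2
    · rw [Matrix.conjTranspose_mul]
      simpa only [Matrix.mul_assoc] using hA3 _ (hB3 D hD)

lemma pauliN_conj_isDiag {P D : Matrix (Fin n → ZMod p) (Fin n → ZMod p) ℂ}
    (hP : P ∈ PauliN p n) (hD : D.IsDiag) : (P * D * Pᴴ).IsDiag :=
  (pauliN_props hP).2.2 D hD

lemma pauliN_conjTranspose {P : Matrix (Fin n → ZMod p) (Fin n → ZMod p) ℂ}
    (hP : P ∈ PauliN p n) : Pᴴ ∈ PauliN p n :=
  (pauliN_props hP).2.1

lemma pauliN_star_mul {P : Matrix (Fin n → ZMod p) (Fin n → ZMod p) ℂ}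
    (hP : P ∈ PauliN p n) : Pᴴ * P = 1 :=
  (pauliN_props hP).1

lemma pauliN_mul_star {P : Matrix (Fin n → ZMod p) (Fin n → ZMod p) ℂ}
    (hP : P ∈ PauliN p n) : P * Pᴴ = 1 :=
  mul_eq_one_comm.mp (pauliN_star_mul hP)

end Pauli

/-! ### The diagonal part of the Clifford hierarchy -/

section Hierarchy

variable {p n : ℕ} [NeZero p]

/-- Each level absorbs Paulis on the right: `(U P) Q (U P)†` is `U` conjugating the Pauli
`P Q P†`. -/
lemma cliffN_mul_pauliN (k : ℕ) {U P : Matrix (Fin n → ZMod p) (Fin n → ZMod p) ℂ}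
    (hU : U ∈ CliffN p n (k + 1)) (hP : P ∈ PauliN p n) : U * P ∈ CliffN p n (k + 1) := by
  cases k with
  | zero =>
    obtain ⟨φ, Q, hQ, rfl⟩ := hU
    exact ⟨φ, Q * P, pauliN_mul hQ hP, by rw [Matrix.smul_mul]⟩
  | succ k =>
    refine ⟨mul_mem hU.1 (Matrix.mem_unitaryGroup_iff.mpr (pauliN_mul_star hP)), fun Q hQ => ?_⟩
    have := hU.2 _ (pauliN_mul (pauliN_mul hP hQ) (pauliN_conjTranspose hP))
    simpa only [Matrix.conjTranspose_mul, Matrix.mul_assoc] using this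

lemma commutator_isDiag {U P : Matrix (Fin n → ZMod p) (Fin n → ZMod p) ℂ}
    (hU : U.IsDiag) (hP : P ∈ PauliN p n) : (U * P * Uᴴ * Pᴴ).IsDiag := by
  have := isDiag_mul hU (pauliN_conj_isDiag hP hU.conjTranspose)
  simpa only [Matrix.mul_assoc] using this

/-- A recursion for the diagonal part of the hierarchy in which the conjugates `U P U†` are
replaced by the commutators `U P U† P†`, which are again diagonal. -/
lemma mem_cliffDN_succ_iff (k : ℕ) {U : Matrix (Fin n → ZMod p) (Fin n → ZMod p) ℂ} :
    U ∈ CliffDN p n (k + 2) ↔ U.IsDiag ∧ U * Uᴴ = 1 ∧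
      ∀ P ∈ PauliN p n, U * P * Uᴴ * Pᴴ ∈ CliffDN p n (k + 1) := by
  constructor
  · rintro ⟨⟨hu, h⟩, hd⟩
    exact ⟨hd, Matrix.mem_unitaryGroup_iff.mp hu, fun P hP =>
      ⟨cliffN_mul_pauliN k (h P hP) (pauliN_conjTranspose hP), commutator_isDiag hd hP⟩⟩
  · rintro ⟨hd, hu, h⟩
    refine ⟨⟨Matrix.mem_unitaryGroup_iff.mpr hu, fun P hP => ?_⟩, hd⟩
    have := cliffN_mul_pauliN k (h P hP).1 hP
    rwa [Matrix.mul_assoc _ Pᴴ, pauliN_star_mul hP, Matrix.mul_one] at this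

lemma cliffDN_one_mem (k : ℕ) :
    (1 : Matrix (Fin n → ZMod p) (Fin n → ZMod p) ℂ) ∈ CliffDN p n (k + 1) := by
  induction k with
  | zero => exact ⟨⟨0, 1, pauliN_one, by simp⟩, Matrix.isDiag_one⟩
  | succ k ih =>
    refine (mem_cliffDN_succ_iff k).mpr ⟨Matrix.isDiag_one, by simp, fun P hP => ?_⟩
    simpa [pauliN_mul_star hP] using ih

lemma cliffDN_mul_mem (k : ℕ) : ∀ {U V : Matrix (Fin n → ZMod p) (Fin n → ZMod p) ℂ},
    U ∈ CliffDN p n (k + 1) → V ∈ CliffDN p n (k + 1) → U * V ∈ CliffDN p n (k + 1) := by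
  induction k with
  | zero =>
    rintro U V ⟨⟨φ, P, hP, rfl⟩, hU⟩ ⟨⟨ψ, Q, hQ, rfl⟩, hV⟩
    refine ⟨⟨φ + ψ, P * Q, pauliN_mul hP hQ, ?_⟩, isDiag_mul hU hV⟩
    rw [smul_mul_smul_comm, ← Complex.exp_add]
    push_cast
    rw [add_mul]
  | succ k ih =>
    intro U V hU hV
    rw [mem_cliffDN_succ_iff] at hU hV ⊢
    obtain ⟨hUd, hUu, hU⟩ := hU
    obtain ⟨hVd, hVu, hV⟩ := hV
    refine ⟨isDiag_mul hUd hVd, ?_, fun P hP => ?_⟩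
    · rw [Matrix.conjTranspose_mul, Matrix.mul_assoc, ← Matrix.mul_assoc V, hVu, Matrix.one_mul,
        hUu]
    · have h : U * V * P * (U * V)ᴴ * Pᴴ = (V * P * Vᴴ * Pᴴ) * (U * P * Uᴴ * Pᴴ) :=
        calc U * V * P * (U * V)ᴴ * Pᴴ
            = U * (V * P * Vᴴ * 1) * Uᴴ * Pᴴ := by
              simp only [Matrix.conjTranspose_mul, Matrix.mul_assoc, Matrix.one_mul]
          _ = (U * (V * P * Vᴴ * Pᴴ)) * P * Uᴴ * Pᴴ := by
              rw [← pauliN_star_mul hP]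
              simp only [Matrix.mul_assoc]
          _ = (V * P * Vᴴ * Pᴴ) * (U * P * Uᴴ * Pᴴ) := by
              rw [isDiag_mul_comm hUd (commutator_isDiag hVd hP)]
              simp only [Matrix.mul_assoc]
      rw [h]
      exact ih (hV P hP) (hU P hP)

lemma cliffDN_conjTranspose_mem (k : ℕ) :
    ∀ {U : Matrix (Fin n → ZMod p) (Fin n → ZMod p) ℂ},
      U ∈ CliffDN p n (k + 1) → Uᴴ ∈ CliffDN p n (k + 1) := by
  induction k with
  | zero =>
    rintro U ⟨⟨φ, P, hP, rfl⟩, hU⟩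
    refine ⟨⟨-φ, Pᴴ, pauliN_conjTranspose hP, ?_⟩, hU.conjTranspose⟩
    rw [Matrix.conjTranspose_smul]
    congr 1
    change (starRingEnd ℂ) _ = _
    rw [← Complex.exp_conj]
    simp
  | succ k ih =>
    intro U hU
    rw [mem_cliffDN_succ_iff] at hU ⊢
    obtain ⟨hUd, hUu, hU⟩ := hU
    refine ⟨hUd.conjTranspose, ?_, fun P hP => ?_⟩
    · rw [Matrix.conjTranspose_conjTranspose]
      exact mul_eq_one_comm.mp hUu
    · -- `U†` and `P U P†` are both diagonal, and swapping them turns `[U†, P]` into `[U, P]†`.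
      have h : Uᴴ * P * Uᴴᴴ * Pᴴ = (U * P * Uᴴ * Pᴴ)ᴴ := by
        have := isDiag_mul_comm hUd.conjTranspose (pauliN_conj_isDiag hP hUd)
        simpa only [Matrix.conjTranspose_mul, Matrix.conjTranspose_conjTranspose,
          Matrix.mul_assoc] using this
      rw [h]
      exact ih (hU P hP)

end Hierarchy

/-- For every number of qudits `n ≥ 1`, prime `p`, and every `k ≥ 1`,
the set `C^k_d` of diagonal gates in the `k`-th level of the Clifford hierarchy is a
group: it contains the identity, is closed under multiplication, and is closed under
taking inverses (adjoints). -/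
theorem diagonal_clifford_is_group (p n k : ℕ) [NeZero p] (hp : p.Prime) (hn : 1 ≤ n)
    (hk : 1 ≤ k) :
    (1 : Matrix (Fin n → ZMod p) (Fin n → ZMod p) ℂ) ∈ CliffDN p n k ∧
    (∀ U V, U ∈ CliffDN p n k → V ∈ CliffDN p n k → U * V ∈ CliffDN p n k) ∧
    (∀ U, U ∈ CliffDN p n k → Uᴴ ∈ CliffDN p n k) := by
  obtain ⟨k, rfl⟩ := Nat.exists_eq_succ_of_ne_zero (Nat.one_le_iff_ne_zero.mp hk)
  exact ⟨cliffDN_one_mem k, fun _ _ => cliffDN_mul_mem k, fun _ => cliffDN_conjTranspose_mem k⟩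
end

section
/- For a single qudit of prime dimension p, every m ≥ 1 and every a with 1 ≤ a ≤ p−1, the group D_{m,a} equals the group C^{(p−1)(m−1)+a}_d of diagonal gates in level (p−1)(m−1)+a of the Clifford hierarchy. -/
/-!
A diagonal unitary is a function `F` from `ZMod p` to the circle, and the circle is written
additively. Let `Δ F (x) = F (x + 1) - F x`, and say that `F` has degree at most `k` if
`Δ ^ (k + 1) F = 0` (a non-classical polynomial). Both sides of the equality consist of the diagonal
unitaries whose phase has degree at most `k = (p - 1)(m - 1) + a`.

*Clifford side.* Conjugating `X` by the diagonal gate of phase `F` gives `X` times the diagonal gate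
of phase `x ↦ F x - F (x - 1)`, and multiplying by Pauli elements does not change the level. Since
level one consists of the phases of degree at most one (times powers of `X`), level `k` consists of
those of degree at most `k`; see `shiftMat_mem_Cliff1` and `mem_CliffD1`.

*The groups `D_{m,a}`.* The shift `T = 1 + Δ` satisfies `T ^ p = 1`, hence
`Δ ^ p = -p Δ (1 + Δ H)` for some operator `H` commuting with `Δ`, where `1 + Δ H` is injective on
functions of bounded degree. So `F` has degree at most `n + (p - 1)` exactly when `p F` has degree at
most `n` (`mem_diffKer_add_prime`). As `p ^ m` times the phase of `U_{m+1,b}` is `x ^ b / p`, whose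
`b`-th difference is the constant `b! / p`, the gate `U_{m+1,b}` has degree exactly
`(p - 1) m + b` for `1 ≤ b < p`. The top difference of any `F` of positive degree is a constant
killed by `p`, because a difference sums to zero over `ZMod p`. It is therefore a multiple of the
top difference of the gate of the same degree (`exists_sub_nsmul_mem`), so `F` can be reduced to a
constant by subtracting multiples of gate phases one degree at a time.
-/


open Matrix Complex

/-- Single-qudit shift gate `X |j⟩ = |j+1⟩` on a qudit of dimension `p`. -/
noncomputable def Xmat1 (p : ℕ) [NeZero p] : Matrix (ZMod p) (ZMod p) ℂ :=
  Matrix.of fun r c => if r = c + 1 then 1 else 0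

/-- Single-qudit phase gate `Z |j⟩ = ω^j |j⟩`, `ω = exp(2πi/p)`. -/
noncomputable def Zmat1 (p : ℕ) [NeZero p] : Matrix (ZMod p) (ZMod p) ℂ :=
  Matrix.of fun r c =>
    if r = c then Complex.exp (2 * Real.pi * Complex.I * ((c.val : ℂ) / (p : ℂ))) else 0

/-- The single-qudit Pauli group `⟨iI, X, Z⟩` (`p = 2`) or `⟨ωI, X, Z⟩` (`p > 2`).
All generators have finite order, so the monoid they generate is already a group. -/
noncomputable def Pauli1 (p : ℕ) [NeZero p] : Set (Matrix (ZMod p) (ZMod p) ℂ) :=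
  ↑(Submonoid.closure {pauliPhase p • (1 : Matrix (ZMod p) (ZMod p) ℂ), Xmat1 p, Zmat1 p})

/-- The Clifford hierarchy on a single qudit:
`C^1 = {e^{iφ} P : P ∈ P}`, and `C^k = {U unitary | U P U† ∈ C^{k-1} ∀ P ∈ P}` for `k ≥ 2`. -/
noncomputable def Cliff1 (p : ℕ) [NeZero p] : ℕ → Set (Matrix (ZMod p) (ZMod p) ℂ)
  | 0 => ∅
  | 1 => {U | ∃ φ : ℝ, ∃ P ∈ Pauli1 p, U = Complex.exp (φ * Complex.I) • P}
  | (k + 2) => {U | U ∈ Matrix.unitaryGroup (ZMod p) ℂ ∧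
      ∀ P ∈ Pauli1 p, U * P * Uᴴ ∈ Cliff1 p (k + 1)}

/-- The diagonal gates in the `k`-th level of the single-qudit Clifford hierarchy. -/
noncomputable def CliffD1 (p : ℕ) [NeZero p] (k : ℕ) : Set (Matrix (ZMod p) (ZMod p) ℂ) :=
  {U | U ∈ Cliff1 p k ∧ U.IsDiag}

/-- The gate `U_{m,a} = Σ_j exp(2πi j^a / p^m) |j⟩⟨j|`, powers computed with the
integer representative `0 ≤ j ≤ p-1`. -/
noncomputable def Uma (p : ℕ) [NeZero p] (m a : ℕ) : Matrix (ZMod p) (ZMod p) ℂ :=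
  Matrix.of fun r c =>
    if r = c then Complex.exp (2 * Real.pi * Complex.I * ((r.val : ℂ) ^ a / (p : ℂ) ^ m)) else 0

/-- The group `D_{m,a} = ⟨U_{m,b} : 1 ≤ b ≤ a⟩ ⬝ {e^{iφ} I} ⬝ D_{m-1,p-1}`, with the
convention `D_{0,·} = {e^{iφ} I}`.  The generators `U_{m,b}` have finite order, so the
monoid they generate is already the group they generate. -/
noncomputable def Dgrp (p : ℕ) [NeZero p] : ℕ → ℕ → Set (Matrix (ZMod p) (ZMod p) ℂ)
  | 0, _ => {U | ∃ φ : ℝ, U = Complex.exp (φ * Complex.I) • 1}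
  | (m + 1), a =>
    {W | ∃ G ∈ Submonoid.closure {V | ∃ b, 1 ≤ b ∧ b ≤ a ∧ V = Uma p (m + 1) b},
      ∃ φ : ℝ, ∃ D ∈ Dgrp p m (p - 1),
        W = Complex.exp (φ * Complex.I) • (G * D)}

/-! ### Phase functions and the difference operator -/

/-- Phase functions on `ZMod p`, with the circle written additively. -/
abbrev PhaseFun (p : ℕ) : Type := ZMod p → Additive Circle

/-- The operator `Δ F (x) = F (x + 1) - F x` on phase functions. -/
noncomputable abbrev diffOp (p : ℕ) : Module.End ℤ (PhaseFun p) :=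
  fwdDiff_aux.fwdDiffₗ (ZMod p) (Additive Circle) 1

/-- The phase functions killed by `Δ ^ n`. -/
noncomputable def diffKer (p n : ℕ) : AddSubgroup (PhaseFun p) :=
  (LinearMap.ker (diffOp p ^ n)).toAddSubgroup

theorem mem_diffKer {p n : ℕ} {F : PhaseFun p} : F ∈ diffKer p n ↔ (diffOp p ^ n) F = 0 :=
  Iff.rfl

theorem diffKer_mono {p n k : ℕ} (h : n ≤ k) : diffKer p n ≤ diffKer p k := by
  intro F hF
  rw [mem_diffKer] at hF ⊢
  obtain ⟨d, rfl⟩ := Nat.exists_eq_add_of_le' h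
  rw [pow_add, Module.End.mul_apply, hF, map_zero]

theorem mem_diffKer_succ {p n : ℕ} {F : PhaseFun p} :
    F ∈ diffKer p (n + 1) ↔ (fun x => F (x + 1) - F x) ∈ diffKer p n := by
  rw [mem_diffKer, mem_diffKer, pow_succ, Module.End.mul_apply]
  rfl

theorem shift_mem_diffKer {p n : ℕ} {F : PhaseFun p} (hF : F ∈ diffKer p n) (j : ZMod p) :
    (fun x => F (x + j)) ∈ diffKer p n := by
  rw [mem_diffKer, fwdDiff_aux.coe_fwdDiffₗ_pow] at hF ⊢
  funext x
  rw [fwdDiff_iter_comp_add, hF]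
  rfl

theorem shift_sub_mem_diffKer {p n : ℕ} [NeZero p] {F : PhaseFun p}
    (hF : F ∈ diffKer p (n + 1)) (j : ZMod p) :
    (fun x => F (x + j) - F x) ∈ diffKer p n := by
  obtain ⟨k, rfl⟩ : ∃ k : ℕ, (k : ZMod p) = j := ⟨j.val, ZMod.natCast_zmod_val j⟩
  induction k with
  | zero => 
    convert (diffKer p n).zero_mem using 1
    funext x; simp
  | succ k ih =>
    convert (diffKer p n).add_mem (shift_mem_diffKer (mem_diffKer_succ.1 hF) (k : ZMod p)) ih using 1
    funext x
    simp [add_assoc]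

/-! ### Extracting `p`-th roots -/

/-- The relation `T ^ p = 1` for the shift `T = 1 + Δ`, expanded in `Δ`. -/
theorem exists_diffOp_relation (p : ℕ) (hp : p.Prime) :
    ∃ H : Module.End ℤ (PhaseFun p), Commute (diffOp p) H ∧
      diffOp p ^ p + (p : Module.End ℤ (PhaseFun p)) * (diffOp p * (1 + diffOp p * H)) = 0 := by
  classical
  obtain ⟨r, hr⟩ := exists_add_pow_prime_eq hp (Polynomial.X : Polynomial ℤ) 1
  -- Comparing the coefficients of `X` in `(X + 1) ^ p = X ^ p + 1 + p X r` gives `r(0) = 1`.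
  have hr0 : r.coeff 0 = 1 := by
    have h := congrArg (fun q => Polynomial.coeff q 1) hr
    have h1 : ((p : Polynomial ℤ) * Polynomial.X * 1 * r) =
        Polynomial.C (p : ℤ) * (r * Polynomial.X) := by
      simp; ring
    have hne : (1 : ℕ) ≠ p := hp.one_lt.ne
    simp only [h1, one_pow, Polynomial.coeff_add, Polynomial.coeff_X_add_one_pow,
      Polynomial.coeff_X_pow, Polynomial.coeff_one, Polynomial.coeff_C_mul] at h
    rw [show (1 : ℕ) = 0 + 1 from rfl, Polynomial.coeff_mul_X] at h
    simp [hne] at h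
    have hp0 : (p : ℤ) ≠ 0 := by exact_mod_cast hp.ne_zero
    exact (mul_left_cancel₀ hp0 (by linarith)).symm
  have hr1 : r = 1 + Polynomial.X * r.divX := by
    conv_lhs => rw [← Polynomial.X_mul_divX_add r, hr0]
    simp [add_comm]
  refine ⟨Polynomial.aeval (diffOp p) r.divX, ?_, ?_⟩
  · have := Polynomial.aeval_X (R := ℤ) (diffOp p)
    conv_lhs => rw [← this]
    rw [commute_iff_eq, ← map_mul, ← map_mul, mul_comm]
  · rw [hr1] at hr
    have h := congrArg (Polynomial.aeval (diffOp p)) hr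
    simp only [map_add, map_mul, map_pow, Polynomial.aeval_X, map_one, map_natCast, one_pow,
      mul_one] at h
    have hT : (diffOp p + 1) ^ p = 1 := by
      ext F x
      have := fwdDiff_aux.shiftₗ_pow_apply (1 : ZMod p) F p x
      rw [fwdDiff_aux.shiftₗ] at this
      rw [this]
      simp
    rw [hT] at h
    rw [← mul_assoc]
    have h2 : (1 : Module.End ℤ (PhaseFun p)) + 0 = 1 + (diffOp p ^ p + ↑p * diffOp p * (1 + diffOp p *
      (Polynomial.aeval (diffOp p)) r.divX)) := by
      rw [add_zero]
      conv_lhs => rw [h]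
      abel
    exact (add_left_cancel h2).symm

/-- Raising the degree by `p - 1` amounts to extracting a `p`-th root: on `Δ`-nilpotent functions
`Δ ^ p` equals `-p Δ` up to an invertible operator. -/
theorem mem_diffKer_add_prime {p : ℕ} (hp : p.Prime) (n : ℕ) (F : PhaseFun p) :
    F ∈ diffKer p (n + p) ↔ p • F ∈ diffKer p (n + 1) := by
  obtain ⟨H, hc, hrel⟩ := exists_diffOp_relation p hp
  rw [mem_diffKer, mem_diffKer]
  set Δ := diffOp p
  have key : (Δ ^ (n + p)) F = -((1 + Δ * H) ((Δ ^ (n + 1)) (p • F))) := by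
    have h1 : Δ ^ (n + p) = -((1 + Δ * H) * (Δ ^ (n + 1) * (p : Module.End ℤ (PhaseFun p)))) := by
      have h2 : Δ ^ p = -((p : Module.End ℤ (PhaseFun p)) * (Δ * (1 + Δ * H))) :=
        eq_neg_of_add_eq_zero_left hrel
      have c1 : Commute (1 + Δ * H) Δ :=
        (Commute.one_left _).add_left ((Commute.refl Δ).mul_left hc.symm)
      rw [pow_add, h2, mul_neg, (Nat.cast_commute p (Δ * (1 + Δ * H))).eq, ← mul_assoc,
        ← mul_assoc, ← mul_assoc, ← pow_succ, (c1.pow_right (n + 1)).eq]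
    have h3 : (p : Module.End ℤ (PhaseFun p)) F = p • F := by
      simp
    rw [h1, LinearMap.neg_apply, Module.End.mul_apply, Module.End.mul_apply, h3]
  constructor
  · intro h
    set G := (Δ ^ (n + 1)) (p • F) with hG
    rw [h] at key
    -- `1 + Δ H` kills `G` and `G` is `Δ`-nilpotent, so iterating `G = -Δ H G` gives `G = 0`.
    have hG1 : G = -((Δ * H) G) := by
      have := (neg_eq_zero.1 key.symm)
      rw [LinearMap.add_apply, Module.End.one_apply] at this
      exact eq_neg_of_add_eq_zero_left this
    have hG2 : (Δ ^ p) G = 0 := by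
      rw [hG, ← Module.End.mul_apply, ← pow_add, map_nsmul, show p + (n + 1) = 1 + (n + p) by ring,
        pow_add, Module.End.mul_apply, h, map_zero, smul_zero]
    have hG3 : ∀ k : ℕ, G = ((-(Δ * H)) ^ k) G := by
      intro k
      induction k with
      | zero => simp
      | succ k ih =>
        rw [pow_succ, Module.End.mul_apply, LinearMap.neg_apply, ← hG1]
        exact ih
    rw [hG3 p, neg_pow, Module.End.mul_apply, hc.mul_pow, (hc.pow_pow p p).eq,
      Module.End.mul_apply, hG2, map_zero, map_zero]
  · intro h
    rw [key, h, map_zero, neg_zero]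

theorem mem_diffKer_prime_pow {p : ℕ} (hp : p.Prime) (m b : ℕ) (F : PhaseFun p) :
    F ∈ diffKer p ((p - 1) * m + b + 1) ↔ p ^ m • F ∈ diffKer p (b + 1) := by
  induction m generalizing F with
  | zero => simp
  | succ m ih =>
    have h : (p - 1) * (m + 1) + b + 1 = ((p - 1) * m + b) + p := by
      have := hp.one_lt
      obtain ⟨q, rfl⟩ : ∃ q, p = q + 1 := ⟨p - 1, by omega⟩
      simp; ring
    rw [h, mem_diffKer_add_prime hp, ih, smul_smul, ← pow_succ]

/-! ### Top differences -/

theorem mem_diffKer_one {p : ℕ} [NeZero p] {F : PhaseFun p} :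
    F ∈ diffKer p 1 ↔ ∃ c, F = fun _ => c := by
  constructor
  · intro h
    refine ⟨F 0, funext fun x => ?_⟩
    have := congrFun (mem_diffKer.1 (shift_sub_mem_diffKer (n := 0) h x)) 0
    simpa [sub_eq_zero] using this
  · rintro ⟨c, rfl⟩
    rw [mem_diffKer_succ, mem_diffKer]
    funext x
    simp

/-- The top difference is a constant, and a `p`-torsion one because a difference sums to zero
over `ZMod p`. -/
theorem exists_top_diff {p : ℕ} [NeZero p] {n : ℕ} {F : PhaseFun p} (hF : F ∈ diffKer p (n + 2)) :
    ∃ c : Additive Circle, p • c = 0 ∧ (diffOp p ^ (n + 1)) F = fun _ => c := by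
  have h1 : (diffOp p ^ (n + 1)) F ∈ diffKer p 1 := by
    rw [mem_diffKer, ← Module.End.mul_apply, ← pow_add, show 1 + (n + 1) = n + 2 by ring]
    exact hF
  obtain ⟨c, hc⟩ := mem_diffKer_one.1 h1
  refine ⟨c, ?_, hc⟩
  have h2 : ∑ x : ZMod p, (diffOp p ^ (n + 1)) F x = 0 := by
    rw [pow_succ', Module.End.mul_apply]
    set G := (diffOp p ^ n) F
    change ∑ x : ZMod p, (G (x + 1) - G x) = 0
    rw [Finset.sum_sub_distrib, sub_eq_zero]
    exact Equiv.sum_comp (Equiv.addRight (1 : ZMod p)) G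
  rw [hc] at h2
  simpa [ZMod.card] using h2

/-- If `F` and `U` are killed by `Δ ^ (n + 2)` but `U` is not killed by `Δ ^ (n + 1)`, the top
difference of `U` generates the `p`-torsion of the circle, so subtracting a multiple of `U` lowers
the degree of `F`. -/
theorem exists_sub_nsmul_mem {p : ℕ} [NeZero p] (hp : p.Prime) {n : ℕ} {F U : PhaseFun p}
    (hF : F ∈ diffKer p (n + 2)) (hU : U ∈ diffKer p (n + 2)) (hU' : U ∉ diffKer p (n + 1)) :
    ∃ s : ℕ, F - s • U ∈ diffKer p (n + 1) := by
  obtain ⟨c, hc, hFc⟩ := exists_top_diff hF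
  obtain ⟨d, hd, hUd⟩ := exists_top_diff hU
  have hd0 : d ≠ 0 := by
    rintro rfl
    exact hU' hUd
  have : Fact p.Prime := ⟨hp⟩
  have hd1 : ((d.toMul : Circle) : ℂ) ^ p = 1 := by
    have h : d.toMul ^ p = 1 := hd
    rw [← Circle.coe_pow, h, Circle.coe_one]
  have hc1 : ((c.toMul : Circle) : ℂ) ^ p = 1 := by
    have h : c.toMul ^ p = 1 := hc
    rw [← Circle.coe_pow, h, Circle.coe_one]
  have hd2 : ((d.toMul : Circle) : ℂ) ≠ 1 := fun h => hd0 (Circle.coe_eq_one.1 h)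
  have hprim : IsPrimitiveRoot ((d.toMul : Circle) : ℂ) p :=
    IsPrimitiveRoot.iff_orderOf.2 (orderOf_eq_prime hd1 hd2)
  obtain ⟨s, -, hs⟩ := hprim.eq_pow_of_pow_eq_one hc1
  have hs' : s • d = c := by
    rw [← Circle.coe_pow, Circle.coe_inj] at hs
    exact hs
  refine ⟨s, ?_⟩
  rw [mem_diffKer, map_sub, map_nsmul, hFc, hUd]
  funext x
  simp [hs']

/-! ### The phases of the gates `U_{m,b}` -/

/-- The phase function of the gate `U_{m,b}`. -/
noncomputable def umaPhase (p m b : ℕ) : PhaseFun p :=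
  fun r => Additive.ofMul (Circle.exp (2 * Real.pi * ((r.val : ℝ) ^ b / (p : ℝ) ^ m)))

theorem nsmul_umaPhase {p : ℕ} [NeZero p] (m b : ℕ) :
    p • umaPhase p (m + 1) b = umaPhase p m b := by
  have hp : (p : ℝ) ≠ 0 := by exact_mod_cast NeZero.ne p
  funext r
  rw [Pi.smul_apply, umaPhase, umaPhase, ← ofMul_pow, ← Circle.exp_natCast_mul]
  congr 2
  field_simp
  ring

theorem pow_nsmul_umaPhase {p : ℕ} [NeZero p] (m b : ℕ) :
    p ^ m • umaPhase p (m + 1) b = umaPhase p 1 b := by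
  induction m with
  | zero => simp
  | succ m ih => rw [pow_succ, ← smul_smul, nsmul_umaPhase, ih]

/-- The phase of `U_{1,b}` is the polynomial `r ^ b` over `ZMod p` followed by the standard additive
character, which commutes with differences. -/
theorem diffOp_pow_umaPhase_one {p : ℕ} [NeZero p] (b n : ℕ) (x : ZMod p) :
    (diffOp p ^ n) (umaPhase p 1 b) x =
      Additive.ofMul (ZMod.toCircle ((fwdDiff 1)^[n] (fun r : ZMod p => r ^ b) x)) := by
  have h0 : umaPhase p 1 b = fun r => Additive.ofMul (ZMod.toCircle (r ^ b)) := by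
    funext r
    have h : Circle.exp (2 * Real.pi * ((r.val : ℝ) ^ b / (p : ℝ) ^ 1)) =
        ZMod.toCircle (r ^ b) := by
      apply Circle.ext
      have h1 : r ^ b = ((r.val ^ b : ℕ) : ZMod p) := by
        rw [Nat.cast_pow, ZMod.natCast_zmod_val]
      rw [h1, ZMod.toCircle_natCast, Circle.coe_exp]
      congr 1
      push_cast
      ring
    exact congrArg Additive.ofMul h
  rw [h0]
  induction n generalizing x with
  | zero => simp
  | succ n ih =>
    rw [pow_succ', Module.End.mul_apply, Function.iterate_succ_apply']
    rw [fwdDiff_aux.fwdDiffₗ_apply, fwdDiff]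
    rw [ih, ih, fwdDiff, AddChar.map_sub_eq_div, ofMul_div]

/-- `U_{m+1,b}` has degree at most `(p - 1) m + b`: its `p ^ m`-th power is `U_{1,b}`, whose phase
is a polynomial of degree `b` over `ZMod p`. -/
theorem umaPhase_mem {p : ℕ} [NeZero p] (hp : p.Prime) (m b : ℕ) :
    umaPhase p (m + 1) b ∈ diffKer p ((p - 1) * m + b + 1) := by
  rw [mem_diffKer_prime_pow hp, pow_nsmul_umaPhase, mem_diffKer]
  funext x
  rw [diffOp_pow_umaPhase_one, fwdDiff_iter_pow_eq_zero_of_lt (Nat.lt_succ_self b)]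
  simp

/-- The degree of `U_{m+1,b+1}` is exactly `(p - 1) m + b + 1` for `b + 1 < p`, since the top
difference of `r ^ (b + 1)` is `(b + 1)!`, a unit modulo `p`. -/
theorem umaPhase_notMem {p : ℕ} [NeZero p] (hp : p.Prime) (m b : ℕ) (hb : b + 1 < p) :
    umaPhase p (m + 1) (b + 1) ∉ diffKer p ((p - 1) * m + b + 1) := by
  rw [mem_diffKer_prime_pow hp, pow_nsmul_umaPhase, mem_diffKer]
  intro h
  have h1 := congrFun h 0
  rw [diffOp_pow_umaPhase_one, fwdDiff_iter_eq_factorial, Pi.zero_apply] at h1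
  have h2 : ZMod.toCircle (((b + 1).factorial : ZMod p → ZMod p) 0) =
      ZMod.toCircle (0 : ZMod p) := by
    rw [AddChar.map_zero_eq_one]
    exact h1
  have h3 := ZMod.injective_toCircle h2
  rw [Pi.natCast_apply, ZMod.natCast_eq_zero_iff, hp.dvd_factorial] at h3
  omega

/-! ### Diagonal unitaries times shifts -/

/-- The matrix sending `|c⟩` to `F (c + j) |c + j⟩`: a diagonal unitary times the shift `X ^ j`.
The phase is indexed by the row. -/
noncomputable def shiftMat {p : ℕ} (F : PhaseFun p) (j : ZMod p) :
    Matrix (ZMod p) (ZMod p) ℂ :=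
  Matrix.of fun r c => if r = c + j then ((F r).toMul : ℂ) else 0

theorem shiftMat_mul {p : ℕ} [NeZero p] (F G : PhaseFun p) (i j : ZMod p) :
    shiftMat F i * shiftMat G j = shiftMat (F + fun x => G (x - i)) (i + j) := by
  ext r c
  rw [Matrix.mul_apply, Finset.sum_eq_single (r - i)]
  · simp only [shiftMat, Matrix.of_apply, sub_add_cancel, if_true, Pi.add_apply, toMul_add,
      Circle.coe_mul]
    have h : r - i = c + j ↔ r = c + (i + j) := by
      rw [sub_eq_iff_eq_add]; ring_nf
    by_cases h1 : r = c + (i + j)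
    · rw [if_pos h1, if_pos (h.2 h1)]
    · rw [if_neg h1, if_neg (mt h.1 h1), mul_zero]
  · intro s _ hs
    have : r ≠ s + i := fun h => hs (by rw [h]; ring)
    simp [shiftMat, this]
  · simp

theorem shiftMat_conjTranspose {p : ℕ} (F : PhaseFun p) (i : ZMod p) :
    (shiftMat F i)ᴴ = shiftMat (-fun x => F (x + i)) (-i) := by
  ext r c
  simp only [shiftMat, Matrix.conjTranspose_apply, Matrix.of_apply, Pi.neg_apply, toMul_neg,
    Circle.coe_inv_eq_conj]
  by_cases h : c = r + i
  · rw [if_pos h, if_pos (by rw [h]; ring), h]; rfl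
  · rw [if_neg h, if_neg (fun h' => h (by rw [h']; ring)), star_zero]

theorem shiftMat_one {p : ℕ} : shiftMat (0 : PhaseFun p) 0 = 1 := by
  ext r c
  simp [shiftMat, Matrix.one_apply]

theorem shiftMat_mem_unitary {p : ℕ} [NeZero p] (F : PhaseFun p) (i : ZMod p) :
    shiftMat F i ∈ Matrix.unitaryGroup (ZMod p) ℂ := by
  rw [Matrix.mem_unitaryGroup_iff, Matrix.star_eq_conjTranspose, shiftMat_conjTranspose,
    shiftMat_mul, ← shiftMat_one]
  congr 1
  · funext x; simp
  · ring

theorem shiftMat_inj {p : ℕ} {F G : PhaseFun p} {i j : ZMod p}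
    (h : shiftMat F i = shiftMat G j) : F = G ∧ i = j := by
  have key : ∀ r, r = (r - i) + j ∧ F r = G r := by
    intro r
    have h1 := congrFun (congrFun h r) (r - i)
    simp only [shiftMat, Matrix.of_apply, sub_add_cancel, if_true] at h1
    by_cases h2 : r = r - i + j
    · rw [if_pos h2, Circle.coe_inj] at h1
      exact ⟨h2, h1⟩
    · rw [if_neg h2] at h1
      exact absurd h1 (Circle.coe_ne_zero _)
  refine ⟨funext fun r => (key r).2, ?_⟩
  have := (key 0).1
  rw [zero_sub, eq_comm, neg_add_eq_zero] at this
  exact this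

/-- Conjugating `shiftMat G j` keeps the shift `j`, translates `G`, and adds the difference of `F`
in direction `j` to the phase. -/
theorem shiftMat_conj {p : ℕ} [NeZero p] (F G : PhaseFun p) (i j : ZMod p) :
    shiftMat F i * shiftMat G j * (shiftMat F i)ᴴ =
      shiftMat ((fun x => F x - F (x - j)) + fun x => G (x - i)) j := by
  rw [shiftMat_conjTranspose, shiftMat_mul, shiftMat_mul]
  congr 1
  · funext x
    simp only [Pi.add_apply, Pi.neg_apply]
    rw [show x - (i + j) + i = x - j by ring]
    abel
  · ring

theorem exists_shiftMat_of_isDiag {p : ℕ} [NeZero p] {U : Matrix (ZMod p) (ZMod p) ℂ}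
    (hU : U ∈ Matrix.unitaryGroup (ZMod p) ℂ) (hd : U.IsDiag) :
    ∃ F : PhaseFun p, U = shiftMat F 0 := by
  have hn : ∀ r, ‖U r r‖ = 1 := by
    intro r
    have h := congrFun (congrFun (Matrix.mem_unitaryGroup_iff.1 hU) r) r
    rw [Matrix.mul_apply, Finset.sum_eq_single r] at h
    · rw [Matrix.star_apply, Matrix.one_apply_eq] at h
      have h2 := congrArg norm h
      rw [norm_mul, norm_star, norm_one] at h2
      nlinarith [norm_nonneg (U r r)]
    · intro s _ hs
      rw [hd hs.symm, zero_mul]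
    · simp
  refine ⟨fun r => Additive.ofMul ⟨U r r, mem_sphere_zero_iff_norm.2 (hn r)⟩, ?_⟩
  ext r c
  simp only [shiftMat, Matrix.of_apply, add_zero]
  by_cases h : r = c
  · subst h
    rw [if_pos rfl]; rfl
  · rw [if_neg h, hd h]

theorem isDiag_shiftMat {p : ℕ} (F : PhaseFun p) : (shiftMat F 0).IsDiag := by
  intro r c h
  simp [shiftMat, h]

theorem smul_shiftMat {p : ℕ} (φ : ℝ) (F : PhaseFun p) (i : ZMod p) :
    Complex.exp (φ * Complex.I) • shiftMat F i =
      shiftMat ((fun _ => Additive.ofMul (Circle.exp φ)) + F) i := by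
  ext r c
  simp [shiftMat, Circle.coe_exp]

theorem smul_one_eq {p : ℕ} (φ : ℝ) :
    Complex.exp (φ * Complex.I) • (1 : Matrix (ZMod p) (ZMod p) ℂ) =
      shiftMat (fun _ => Additive.ofMul (Circle.exp φ)) 0 := by
  rw [← shiftMat_one, smul_shiftMat, add_zero]

theorem exists_exp_eq (c : Additive Circle) : ∃ φ : ℝ, c = Additive.ofMul (Circle.exp φ) := by
  obtain ⟨φ, hφ⟩ := Circle.exp_surjective c.toMul
  exact ⟨φ, by rw [hφ]; rfl⟩

theorem Uma_eq {p : ℕ} [NeZero p] (m b : ℕ) : Uma p m b = shiftMat (umaPhase p m b) 0 := by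
  ext r c
  simp only [Uma, shiftMat, umaPhase, Matrix.of_apply, add_zero, toMul_ofMul, Circle.coe_exp]
  congr 2
  push_cast
  ring

theorem Zmat1_eq {p : ℕ} [NeZero p] : Zmat1 p = shiftMat (umaPhase p 1 1) 0 := by
  rw [← Uma_eq]
  ext r c
  simp only [Zmat1, Uma, Matrix.of_apply, pow_one]
  by_cases h : r = c
  · rw [h]
  · rw [if_neg h, if_neg h]

theorem Xmat1_eq {p : ℕ} [NeZero p] : Xmat1 p = shiftMat 0 1 := by
  ext r c
  simp [Xmat1, shiftMat]

theorem exists_pauliPhase_eq (p : ℕ) : ∃ φ : ℝ, pauliPhase p = Complex.exp (φ * Complex.I) := by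
  unfold pauliPhase
  split_ifs
  · refine ⟨Real.pi / 2, ?_⟩
    push_cast
    rw [Complex.exp_pi_div_two_mul_I]
  · refine ⟨2 * Real.pi / p, ?_⟩
    congr 1
    push_cast
    ring

theorem const_mem_diffKer {p : ℕ} [NeZero p] (n : ℕ) (c : Additive Circle) :
    (fun _ => c : PhaseFun p) ∈ diffKer p (n + 1) :=
  diffKer_mono (by omega) (mem_diffKer_one.2 ⟨c, rfl⟩)

/-! ### Levels of the Clifford hierarchy -/

theorem Pauli1_subset {p : ℕ} [NeZero p] (hp : p.Prime) {P : Matrix (ZMod p) (ZMod p) ℂ}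
    (hP : P ∈ Pauli1 p) : ∃ G ∈ diffKer p 2, ∃ i, P = shiftMat G i := by
  induction hP using Submonoid.closure_induction with
  | mem x hx =>
    rcases hx with rfl | rfl | rfl
    · obtain ⟨φ, hφ⟩ := exists_pauliPhase_eq p
      rw [hφ, smul_one_eq]
      exact ⟨_, const_mem_diffKer 1 _, 0, rfl⟩
    · exact ⟨0, (diffKer p 2).zero_mem, 1, Xmat1_eq⟩
    · refine ⟨_, ?_, 0, Zmat1_eq⟩
      simpa using umaPhase_mem hp 0 1
  | one => exact ⟨0, (diffKer p 2).zero_mem, 0, shiftMat_one.symm⟩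
  | mul x y _ _ hx hy =>
    obtain ⟨G, hG, i, rfl⟩ := hx
    obtain ⟨G', hG', j, rfl⟩ := hy
    refine ⟨_, ?_, _, shiftMat_mul G G' i j⟩
    refine (diffKer p 2).add_mem hG ?_
    simpa only [sub_eq_add_neg] using shift_mem_diffKer hG' (-i)

theorem Xmat1_pow {p : ℕ} [NeZero p] (n : ℕ) : Xmat1 p ^ n = shiftMat 0 (n : ZMod p) := by
  induction n with
  | zero => simp [shiftMat_one]
  | succ n ih =>
    rw [pow_succ, ih, Xmat1_eq, shiftMat_mul, Nat.cast_succ]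
    congr 1
    funext x; simp

theorem shiftMat_nsmul {p : ℕ} [NeZero p] (F : PhaseFun p) (n : ℕ) :
    shiftMat (n • F) 0 = shiftMat F 0 ^ n := by
  induction n with
  | zero => simp [shiftMat_one]
  | succ n ih =>
    rw [pow_succ, ← ih, shiftMat_mul, succ_nsmul]
    simp

/-- The first level consists of the matrices `shiftMat G i` with `G` of degree at most one: such a
`G` is a constant plus a multiple of the phase of `Z`. -/
theorem mem_Cliff1_one {p : ℕ} [NeZero p] (hp : p.Prime) {U : Matrix (ZMod p) (ZMod p) ℂ} :
    U ∈ Cliff1 p 1 ↔ ∃ G ∈ diffKer p 2, ∃ i, U = shiftMat G i := by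
  constructor
  · rintro ⟨φ, P, hP, rfl⟩
    obtain ⟨G, hG, i, rfl⟩ := Pauli1_subset hp hP
    exact ⟨_, (diffKer p 2).add_mem (const_mem_diffKer 1 _) hG, i, smul_shiftMat φ G i⟩
  · rintro ⟨G, hG, i, rfl⟩
    have hz := umaPhase_mem hp 0 1
    have hz' : umaPhase p 1 1 ∉ diffKer p 1 := by
      simpa using umaPhase_notMem hp 0 0 hp.one_lt
    obtain ⟨s, hs⟩ := exists_sub_nsmul_mem hp (n := 0) hG (by simpa using hz) hz'
    obtain ⟨c, hc⟩ := mem_diffKer_one.1 hs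
    obtain ⟨φ, rfl⟩ := exists_exp_eq c
    refine ⟨φ, Zmat1 p ^ s * Xmat1 p ^ i.val, ?_, ?_⟩
    · exact Submonoid.mul_mem _
        (Submonoid.pow_mem _ (Submonoid.subset_closure (by simp)) _)
        (Submonoid.pow_mem _ (Submonoid.subset_closure (by simp)) _)
    · rw [Zmat1_eq, ← shiftMat_nsmul, Xmat1_pow, shiftMat_mul, smul_shiftMat,
        ZMod.natCast_zmod_val, zero_add, ← hc]
      congr 1
      funext x
      simp

/-- Level `k + 1` of the hierarchy corresponds to phases of degree at most `k + 1`: conjugating `X`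
takes one difference, while conjugating any other Pauli element gives a sum of such differences and
a phase of degree at most one. -/
theorem shiftMat_mem_Cliff1 {p : ℕ} [NeZero p] (hp : p.Prime) (k : ℕ) (F : PhaseFun p)
    (i : ZMod p) : shiftMat F i ∈ Cliff1 p (k + 1) ↔ F ∈ diffKer p (k + 2) := by
  induction k generalizing F i with
  | zero =>
    rw [mem_Cliff1_one hp]
    constructor
    · rintro ⟨G, hG, j, h⟩
      rw [(shiftMat_inj h).1]
      exact hG
    · intro h
      exact ⟨F, h, i, rfl⟩
  | succ k ih =>
    constructor
    · rintro ⟨-, h⟩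
      have hX := h (Xmat1 p) (Submonoid.subset_closure (by simp))
      rw [Xmat1_eq, shiftMat_conj, ih] at hX
      rw [mem_diffKer_succ]
      convert shift_mem_diffKer hX 1 using 1
      funext x
      simp
    · intro h
      refine ⟨shiftMat_mem_unitary F i, fun P hP => ?_⟩
      obtain ⟨G, hG, j, rfl⟩ := Pauli1_subset hp hP
      rw [shiftMat_conj, ih]
      refine (diffKer p (k + 2)).add_mem ?_ ?_
      · convert (diffKer p (k + 2)).neg_mem (shift_sub_mem_diffKer h (-j)) using 1
        funext x
        simp [sub_eq_add_neg]
      · have := shift_mem_diffKer (diffKer_mono (by omega : 2 ≤ k + 2) hG) (-i)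
        simpa only [sub_eq_add_neg] using this

theorem Cliff1_subset_unitary {p : ℕ} [NeZero p] (hp : p.Prime) (k : ℕ)
    {U : Matrix (ZMod p) (ZMod p) ℂ} (hU : U ∈ Cliff1 p (k + 1)) :
    U ∈ Matrix.unitaryGroup (ZMod p) ℂ := by
  cases k with
  | zero =>
    obtain ⟨G, -, i, rfl⟩ := (mem_Cliff1_one hp).1 hU
    exact shiftMat_mem_unitary G i
  | succ k => exact hU.1

theorem mem_CliffD1 {p : ℕ} [NeZero p] (hp : p.Prime) (k : ℕ)
    {U : Matrix (ZMod p) (ZMod p) ℂ} :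
    U ∈ CliffD1 p (k + 1) ↔ ∃ F ∈ diffKer p (k + 2), U = shiftMat F 0 := by
  constructor
  · rintro ⟨hU, hd⟩
    obtain ⟨F, rfl⟩ := exists_shiftMat_of_isDiag (Cliff1_subset_unitary hp k hU) hd
    exact ⟨F, (shiftMat_mem_Cliff1 hp k F 0).1 hU, rfl⟩
  · rintro ⟨F, hF, rfl⟩
    exact ⟨(shiftMat_mem_Cliff1 hp k F 0).2 hF, isDiag_shiftMat F⟩

/-! ### The groups `D_{m,a}` -/

theorem shiftMat_zero_mul {p : ℕ} [NeZero p] (F G : PhaseFun p) :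
    shiftMat F 0 * shiftMat G 0 = shiftMat (F + G) 0 := by
  rw [shiftMat_mul]
  simp

theorem exists_of_mem_Dgrp_of_prev {p : ℕ} [NeZero p] (hp : p.Prime) (m a : ℕ)
    (hprev : ∀ D ∈ Dgrp p m (p - 1), ∃ F ∈ diffKer p ((p - 1) * m + 1), D = shiftMat F 0)
    {W : Matrix (ZMod p) (ZMod p) ℂ} (hW : W ∈ Dgrp p (m + 1) a) :
    ∃ F ∈ diffKer p ((p - 1) * m + a + 1), W = shiftMat F 0 := by
  obtain ⟨G, hG, φ, D, hD, rfl⟩ := hW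
  obtain ⟨F, hF, rfl⟩ := hprev D hD
  have hG' : ∃ F ∈ diffKer p ((p - 1) * m + a + 1), G = shiftMat F 0 := by
    clear hD hF
    induction hG using Submonoid.closure_induction with
    | mem x hx =>
      obtain ⟨b, -, hb, rfl⟩ := hx
      exact ⟨_, diffKer_mono (by omega) (umaPhase_mem hp m b), Uma_eq _ _⟩
    | one => exact ⟨0, AddSubgroup.zero_mem _, shiftMat_one.symm⟩
    | mul x y _ _ hx hy =>
      obtain ⟨F₁, h₁, rfl⟩ := hx
      obtain ⟨F₂, h₂, rfl⟩ := hy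
      exact ⟨_, AddSubgroup.add_mem _ h₁ h₂, shiftMat_zero_mul _ _⟩
  obtain ⟨F', hF', rfl⟩ := hG'
  refine ⟨_, ?_, by rw [shiftMat_zero_mul, smul_shiftMat]⟩
  exact AddSubgroup.add_mem _ (const_mem_diffKer _ _)
    (AddSubgroup.add_mem _ hF' (diffKer_mono (by omega) hF))

theorem exists_of_mem_Dgrp {p : ℕ} [NeZero p] (hp : p.Prime) (m a : ℕ)
    {W : Matrix (ZMod p) (ZMod p) ℂ} (hW : W ∈ Dgrp p (m + 1) a) :
    ∃ F ∈ diffKer p ((p - 1) * m + a + 1), W = shiftMat F 0 := by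
  induction m generalizing a W with
  | zero =>
    refine exists_of_mem_Dgrp_of_prev hp 0 a (fun D hD => ?_) hW
    obtain ⟨φ, rfl⟩ := hD
    exact ⟨_, const_mem_diffKer _ _, smul_one_eq φ⟩
  | succ m ih => exact exists_of_mem_Dgrp_of_prev hp (m + 1) a (fun D hD => ih (p - 1) hD) hW

/-- Removing multiples of the phases of `U_{m+1,a}, U_{m+1,a-1}, …, U_{m+1,1}` in turn lowers the
degree to `(p - 1) m`, where the previous group takes over. -/
theorem shiftMat_mem_Dgrp_of_prev {p : ℕ} [NeZero p] (hp : p.Prime) (m a : ℕ) (ha : a ≤ p - 1)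
    (hprev : ∀ F ∈ diffKer p ((p - 1) * m + 1), shiftMat F 0 ∈ Dgrp p m (p - 1))
    {F : PhaseFun p} (hF : F ∈ diffKer p ((p - 1) * m + a + 1)) :
    shiftMat F 0 ∈ Dgrp p (m + 1) a := by
  induction a generalizing F with
  | zero => exact ⟨1, Submonoid.one_mem _, 0, _, hprev F hF, by simp⟩
  | succ a ih =>
    have := hp.one_lt
    obtain ⟨s, hs⟩ := exists_sub_nsmul_mem hp hF (umaPhase_mem hp m (a + 1))
      (umaPhase_notMem hp m a (by omega))
    obtain ⟨G, hG, φ, D, hD, h⟩ := ih (by omega) hs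
    refine ⟨Uma p (m + 1) (a + 1) ^ s * G, ?_, φ, D, hD, ?_⟩
    · refine Submonoid.mul_mem _ (Submonoid.pow_mem _ (Submonoid.subset_closure ?_) _) ?_
      · exact ⟨a + 1, by omega, le_rfl, rfl⟩
      · refine Submonoid.closure_mono ?_ hG
        rintro V ⟨b, hb1, hb2, rfl⟩
        exact ⟨b, hb1, by omega, rfl⟩
    · rw [mul_assoc, ← mul_smul_comm, ← h, Uma_eq, ← shiftMat_nsmul, shiftMat_zero_mul,
        add_sub_cancel]

theorem shiftMat_mem_Dgrp {p : ℕ} [NeZero p] (hp : p.Prime) (m a : ℕ) (ha : a ≤ p - 1)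
    {F : PhaseFun p} (hF : F ∈ diffKer p ((p - 1) * m + a + 1)) :
    shiftMat F 0 ∈ Dgrp p (m + 1) a := by
  induction m generalizing a F with
  | zero =>
    refine shiftMat_mem_Dgrp_of_prev hp 0 a ha (fun F hF => ?_) hF
    rw [mul_zero, zero_add] at hF
    obtain ⟨c, rfl⟩ := mem_diffKer_one.1 hF
    obtain ⟨φ, rfl⟩ := exists_exp_eq c
    exact ⟨φ, (smul_one_eq φ).symm⟩
  | succ m ih =>
    exact shiftMat_mem_Dgrp_of_prev hp (m + 1) a ha (fun F hF => ih (p - 1) le_rfl hF) hF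

/-- For a single qudit of prime dimension `p`, every `m ≥ 1` and every
`a` with `1 ≤ a ≤ p-1`, the group `D_{m,a}` equals the group `C^{(p-1)(m-1)+a}_d` of
diagonal gates in level `(p-1)(m-1)+a` of the Clifford hierarchy. -/
theorem Dgrp_eq_diagonal_clifford (p m a : ℕ) [NeZero p] (hp : p.Prime) (hm : 1 ≤ m)
    (ha1 : 1 ≤ a) (ha2 : a ≤ p - 1) :
    Dgrp p m a = CliffD1 p ((p - 1) * (m - 1) + a) := by
  obtain ⟨m, rfl⟩ := Nat.exists_eq_add_of_le' hm
  obtain ⟨a, rfl⟩ := Nat.exists_eq_add_of_le' ha1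
  ext W
  rw [Nat.add_sub_cancel, ← add_assoc, mem_CliffD1 hp]
  constructor
  · exact exists_of_mem_Dgrp hp m (a + 1)
  · rintro ⟨F, hF, rfl⟩
    exact shiftMat_mem_Dgrp hp m (a + 1) ha2 hF
end

section
/- For a single qudit of prime dimension p, every m ≥ 1 and every a with 1 ≤ a ≤ p−1, the set C^{(p−1)(m−1)+a}_d of diagonal gates in level (p−1)(m−1)+a of the Clifford hierarchy is contained in the group D_{m,a}. -/
/-! A diagonal gate is a function `u : ZMod p → Circle`, i.e. an element of the module of functions
from `ZMod p` to an additive group `A`, on which the shift `S` and the difference `T = S - 1` act.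
If `U` is in level `k + 1`, then `U X⁻¹ U† X` is a diagonal gate in level `k`, with function `-T u`.
Level one consists of characters of `ZMod p` up to phase, which `T ^ 2` kills; so a diagonal gate
in level `k` satisfies `T ^ (k + 1) u = 0` (`fdiff_pow_of_mem_Cliff1`).

Since `(1 + T) ^ p = S ^ p = 1`, and `((1 + T) ^ p - 1 - T ^ p) / (p T)` is an integer polynomial in
`T` with constant term `1`, hence coprime to `T ^ p`, the relation `T ^ p h = 0` gives `p T h = 0`:
`p - 1` factors `T` can be traded for a factor `p` (`fdiff_torsion`). With
`k = (p - 1)(m - 1) + a` it follows that the Newton coefficients `c i = (T ^ i u) 0` in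
`u j = ∏ i, c i ^ (j.choose i)` are `p ^ m`-torsion for `i ≥ 1` and `p ^ (m - 1)`-torsion for `i > a`.
As `i!` is invertible modulo `p` for `i < p`, and `i! * j.choose i` is an integer polynomial in `j`
of degree `i` without constant term, each factor is a product of powers of the gates `U_{m,b}`,
respectively `U_{m-1,b}`, with `1 ≤ b ≤ i` (`diagonal_choose_mem`). -/

open Matrix Complex

/-! ### Differences of functions on `ZMod p` -/

open Polynomial in
/-- Writing `(X + 1) ^ p - 1 = X ^ p + p X r`, the polynomial `r` has constant term `1`, so it is
coprime to `X ^ p`, and a Bézout relation recovers `p X`. -/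
lemma exists_mul_X_eq (p : ℕ) (hp : p.Prime) :
    ∃ u w : ℤ[X], (p : ℤ[X]) * X = u * ((X + 1) ^ p - 1) + w * X ^ p := by
  obtain ⟨r, hr⟩ := exists_add_pow_prime_eq hp (X : ℤ[X]) 1
  have hr0 : r.coeff 0 = 1 := by
    have h := congrArg (fun q => coeff q 1) hr
    have h2 : (1 : ℕ) ≠ p := hp.one_lt.ne
    have h3 : (p : ℤ[X]) * X * 1 * r = C (p : ℤ) * (X * r) := by
      simp; ring
    simp only [h3, coeff_add, coeff_X_add_one_pow, coeff_C_mul, one_pow, coeff_X_pow,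
      if_neg h2, coeff_one] at h
    rw [show (1 : ℕ) = 0 + 1 from rfl, coeff_X_mul] at h
    have hp0 : (p : ℤ) ≠ 0 := by exact_mod_cast hp.ne_zero
    have h4 : (p : ℤ) * 1 = p * r.coeff 0 := by simpa using h
    exact (mul_left_cancel₀ hp0 h4).symm
  have hco : IsCoprime r (X ^ p : ℤ[X]) := by
    apply IsCoprime.pow_right
    refine ⟨1, -r.divX, ?_⟩
    have := r.divX_mul_X_add
    rw [hr0] at this
    nth_rewrite 1 [← this]
    simp
  obtain ⟨u, v, huv⟩ := hco
  refine ⟨u, (p : ℤ[X]) * X * v - u, ?_⟩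
  linear_combination (-(p : ℤ[X]) * X) * huv - u * hr

/-- The shift `f ↦ f (· + 1)` on functions on `ZMod p`. -/
def shiftEnd (p : ℕ) (A : Type*) [AddCommGroup A] : Module.End ℤ (ZMod p → A) :=
  LinearMap.funLeft ℤ A (fun j => j + 1)

/-- The forward difference `f ↦ f (· + 1) - f` on functions on `ZMod p`. -/
def fdiff (p : ℕ) (A : Type*) [AddCommGroup A] : Module.End ℤ (ZMod p → A) :=
  shiftEnd p A - 1

section Difference

variable {p : ℕ} {A : Type*} [AddCommGroup A]

lemma fdiff_apply (f : ZMod p → A) (j : ZMod p) : fdiff p A f j = f (j + 1) - f j := rfl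

lemma shiftEnd_pow_apply (n : ℕ) (f : ZMod p → A) (j : ZMod p) :
    (shiftEnd p A ^ n) f j = f (j + n) := by
  induction n generalizing f with
  | zero => simp
  | succ n ih =>
    rw [pow_succ, Module.End.mul_apply, ih]
    change f (j + n + 1) = _
    push_cast
    rw [add_assoc]

lemma shiftEnd_pow_p : shiftEnd p A ^ p = 1 := by
  ext1 f
  funext j
  simp [shiftEnd_pow_apply]

open Polynomial in
/-- The relation `(T + 1) ^ p = 1` turns `T ^ p h = 0` into `p T h = 0`. -/
lemma nsmul_fdiff_eq_zero (hp : p.Prime) (h : ZMod p → A) (hh : (fdiff p A ^ p) h = 0) :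
    p • fdiff p A h = 0 := by
  obtain ⟨u, w, huw⟩ := exists_mul_X_eq p hp
  have h1 := congrArg (fun q => aeval (fdiff p A) q h) huw
  have h2 : fdiff p A + 1 = shiftEnd p A := by simp [fdiff]
  simp only [map_add, map_mul, map_sub, map_pow, aeval_X, map_one, h2, shiftEnd_pow_p, sub_self,
    mul_zero, zero_add, Module.End.mul_apply, hh, map_zero, map_natCast] at h1
  simpa using h1

/-- Each block of `p - 1` differences can be traded for a factor `p`. -/
lemma fdiff_torsion (hp : p.Prime) (t : ℕ) (g : ZMod p → A)
    (hg : (fdiff p A ^ ((p - 1) * t + 1)) g = 0) : p ^ t • fdiff p A g = 0 := by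
  induction t generalizing g with
  | zero => simpa using hg
  | succ t ih =>
    have h1 : p • fdiff p A ((fdiff p A ^ ((p - 1) * t)) g) = 0 := by
      apply nsmul_fdiff_eq_zero hp
      rw [← Module.End.mul_apply, ← pow_add, ← hg]
      congr 2
      have := hp.one_lt
      rw [mul_add]
      omega
    have h2 : (fdiff p A ^ ((p - 1) * t + 1)) (p • g) = 0 := by
      rw [map_nsmul, pow_succ', Module.End.mul_apply, h1]
    have h3 := ih _ h2
    rw [map_nsmul, ← mul_smul, ← pow_succ] at h3
    exact h3

/-- Newton's forward difference formula on the representatives `0, …, p - 1`. -/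
lemma newton_expansion [NeZero p] (f : ZMod p → A) (j : ZMod p) :
    f j = ∑ i ∈ Finset.range p, (j.val.choose i) • ((fdiff p A ^ i) f 0) := by
  have h1 : f j = (shiftEnd p A ^ j.val) f 0 := by
    rw [shiftEnd_pow_apply]; simp
  have h2 : shiftEnd p A = fdiff p A + 1 := by simp [fdiff]
  rw [h1, h2, (Commute.one_right _).add_pow]
  have h3 : Finset.range (j.val + 1) ⊆ Finset.range p :=
    Finset.range_mono (ZMod.val_lt j)
  rw [← Finset.sum_subset h3]
  · rw [LinearMap.sum_apply, Finset.sum_apply]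
    refine Finset.sum_congr rfl fun i _ => ?_
    rw [one_pow, mul_one, ← nsmul_eq_mul']
    rfl
  · intro i _ hi
    rw [Finset.mem_range, not_lt] at hi
    rw [Nat.choose_eq_zero_of_lt (by omega), zero_smul]

end Difference

/-! ### Diagonal gates as polynomial phases -/

section Gates

variable {p : ℕ} [NeZero p]

lemma Xmat1_pow_s4 (n : ℕ) :
    Xmat1 p ^ n = Matrix.of fun r c => if r = c + (n : ZMod p) then (1 : ℂ) else 0 := by
  induction n with
  | zero => ext r c; simp [Matrix.one_apply]
  | succ n ih =>
    ext r c
    rw [pow_succ, ih, Matrix.mul_apply]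
    simp [Xmat1, add_assoc, add_comm (n : ZMod p) 1]

lemma Xmat1_conjTranspose : (Xmat1 p)ᴴ = Xmat1 p ^ (p - 1) := by
  have h : ((p - 1 : ℕ) : ZMod p) = -1 := by
    rw [Nat.cast_sub (NeZero.one_le)]; simp
  ext r c
  rw [Xmat1_pow_s4, h]
  have : c = r + 1 ↔ r = c + -1 := by
    constructor <;> rintro rfl <;> ring
  by_cases hc : c = r + 1
  · simp [Xmat1, Matrix.conjTranspose_apply, hc]
  · simp [Xmat1, Matrix.conjTranspose_apply, hc, mt this.2 hc]

lemma Xmat1_mul_conjTranspose : Xmat1 p * (Xmat1 p)ᴴ = 1 := by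
  rw [Xmat1_conjTranspose, ← pow_succ', Nat.sub_add_cancel NeZero.one_le, Xmat1_pow_s4]
  ext r c
  simp [Matrix.one_apply]

lemma Xmat1_mem : Xmat1 p ∈ Pauli1 p := Submonoid.subset_closure (by simp)

lemma Pauli1_mul {P Q : Matrix (ZMod p) (ZMod p) ℂ} (hP : P ∈ Pauli1 p) (hQ : Q ∈ Pauli1 p) :
    P * Q ∈ Pauli1 p := Submonoid.mul_mem _ hP hQ

lemma Xmat1_conjTranspose_mem : (Xmat1 p)ᴴ ∈ Pauli1 p := by
  rw [Xmat1_conjTranspose]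
  exact Submonoid.pow_mem _ Xmat1_mem _

lemma Cliff1_mul_Xmat1 (k : ℕ) {U : Matrix (ZMod p) (ZMod p) ℂ} (hU : U ∈ Cliff1 p (k + 1)) :
    U * Xmat1 p ∈ Cliff1 p (k + 1) := by
  cases k with
  | zero =>
    obtain ⟨φ, P, hP, rfl⟩ := hU
    exact ⟨φ, P * Xmat1 p, Pauli1_mul hP Xmat1_mem, by rw [Matrix.smul_mul]⟩
  | succ k =>
    obtain ⟨hU1, hU2⟩ := hU
    refine ⟨mul_mem hU1 ?_, fun P hP => ?_⟩
    · rw [Matrix.mem_unitaryGroup_iff, Matrix.star_eq_conjTranspose]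
      exact Xmat1_mul_conjTranspose
    · have := hU2 _ (Pauli1_mul (Pauli1_mul Xmat1_mem hP) Xmat1_conjTranspose_mem)
      simpa [Matrix.conjTranspose_mul, mul_assoc] using this

/-- Every Pauli operator is `c X^x Z^b` for a phase `c`. -/
lemma Pauli1_form {P : Matrix (ZMod p) (ZMod p) ℂ} (hP : P ∈ Pauli1 p) :
    ∃ (c : Circle) (x b : ZMod p),
      P = Matrix.of fun r s => if r = s + x then ((c * ZMod.toCircle (b * s) : Circle) : ℂ) else 0 := by
  refine Submonoid.closure_induction (motive := fun P _ => ∃ (c : Circle) (x b : ZMod p),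
      P = Matrix.of fun r s => if r = s + x then ((c * ZMod.toCircle (b * s) : Circle) : ℂ) else 0)
      ?_ ?_ ?_ hP
  · rintro Q (rfl | rfl | rfl)
    · have : ∃ c : Circle, pauliPhase p = c := by
        unfold pauliPhase
        split_ifs
        · exact ⟨⟨Complex.I, by simp [Submonoid.unitSphere]⟩, rfl⟩
        · refine ⟨Circle.exp (2 * Real.pi / p), ?_⟩
          rw [Circle.coe_exp]
          push_cast
          congr 1; ring
      obtain ⟨c, hc⟩ := this
      refine ⟨c, 0, 0, ?_⟩
      ext r s
      simp [Matrix.one_apply, hc]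
    · refine ⟨1, 1, 0, ?_⟩
      ext r s
      simp [Xmat1]
    · refine ⟨1, 0, 1, ?_⟩
      ext r s
      simp [Zmat1, ZMod.toCircle_apply, mul_div_assoc]
  · refine ⟨1, 0, 0, ?_⟩
    ext r s
    simp [Matrix.one_apply]
  · rintro P Q _ _ ⟨c, x, b, rfl⟩ ⟨c', x', b', rfl⟩
    refine ⟨c * c' * ZMod.toCircle (b * x'), x + x', b + b', ?_⟩
    ext r s
    rw [Matrix.mul_apply, Finset.sum_eq_single (s + x')]
    · have : s + x' + x = s + (x + x') := by ring
      simp only [Matrix.of_apply, this, if_true, mul_add, add_mul, AddChar.map_add_eq_mul]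
      split_ifs
      · push_cast; ring
      · simp
    · intro t _ ht
      simp [ht]
    · simp

lemma diagonal_mem_Cliff1_one {U : Matrix (ZMod p) (ZMod p) ℂ} (hU : U ∈ Cliff1 p 1)
    (hd : U.IsDiag) : ∃ (c : Circle) (b : ZMod p),
      U = Matrix.diagonal fun s => ((c * ZMod.toCircle (b * s) : Circle) : ℂ) := by
  obtain ⟨φ, P, hP, rfl⟩ := hU
  obtain ⟨c, x, b, rfl⟩ := Pauli1_form hP
  have hx : x = 0 := by
    by_contra hx
    have := hd (i := x) (j := 0) hx
    simp at this
  subst hx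
  refine ⟨Circle.exp φ * c, b, ?_⟩
  ext r s
  by_cases h : r = s
  · subst h; simp [mul_assoc]
  · simp [h]

lemma fdiff_sq_character (c : Circle) (b : ZMod p) :
    (fdiff p (Additive Circle) ^ 2) (fun s => Additive.ofMul (c * ZMod.toCircle (b * s))) = 0 := by
  have h : fdiff p (Additive Circle) (fun s => Additive.ofMul (c * ZMod.toCircle (b * s)))
      = fun _ => Additive.ofMul (ZMod.toCircle b) := by
    funext j
    rw [fdiff_apply, ← ofMul_div, mul_add, mul_one, AddChar.map_add_eq_mul]
    congr 1
    rw [← mul_assoc, mul_div_cancel_left]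
  rw [pow_two, Module.End.mul_apply, h]
  funext j
  simp [fdiff_apply]

/-- A diagonal gate in level `k + 1` of the hierarchy is a polynomial phase of degree at most
`k + 1`: its iterated difference of order `k + 2` vanishes. -/
lemma fdiff_pow_of_mem_Cliff1 (k : ℕ) (u : ZMod p → Circle)
    (hu : Matrix.diagonal (fun j => (u j : ℂ)) ∈ Cliff1 p (k + 1)) :
    (fdiff p (Additive Circle) ^ (k + 2)) (fun j => Additive.ofMul (u j)) = 0 := by
  induction k generalizing u with
  | zero =>
    obtain ⟨c, b, h⟩ := diagonal_mem_Cliff1_one hu (Matrix.isDiag_diagonal _)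
    have : u = fun s => c * ZMod.toCircle (b * s) := by
      funext s
      exact Circle.ext (congrFun (Matrix.diagonal_injective h) s)
    rw [this]
    exact fdiff_sq_character c b
  | succ k ih =>
    obtain ⟨_, hU⟩ := hu
    have h1 := Cliff1_mul_Xmat1 k (hU _ Xmat1_conjTranspose_mem)
    -- the left side is `(U X⁻¹ U†) X`, as `X` is unitary
    have h2 : Matrix.diagonal (fun j => (u j : ℂ)) * (Xmat1 p)ᴴ *
        (Matrix.diagonal (fun j => (u j : ℂ)))ᴴ * Xmat1 p =
        Matrix.diagonal (fun j => ((u j / u (j + 1) : Circle) : ℂ)) := by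
      ext r c
      rw [Matrix.mul_apply, Finset.sum_eq_single (c + 1)]
      · rw [Matrix.diagonal_conjTranspose, Matrix.mul_diagonal, Matrix.diagonal_mul]
        by_cases h : r = c
        · subst h
          simp [Xmat1, div_eq_mul_inv, ← Circle.coe_inv_eq_conj, Matrix.conjTranspose_apply]
        · have h' : c ≠ r := fun e => h e.symm
          simp [Xmat1, h, h', Matrix.conjTranspose_apply]
      · intro t _ ht
        simp [Xmat1, ht]
      · simp
    rw [h2] at h1
    have h3 := ih _ h1
    have h4 : (fun j => Additive.ofMul (u j / u (j + 1))) =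
        -(fdiff p (Additive Circle) (fun j => Additive.ofMul (u j))) := by
      funext j
      rw [Pi.neg_apply, fdiff_apply, neg_sub, ofMul_div]
    rw [h4, map_neg, neg_eq_zero, ← Module.End.mul_apply, ← pow_succ] at h3
    exact h3

lemma exists_diagonal_of_mem_CliffD1 (k : ℕ) {U : Matrix (ZMod p) (ZMod p) ℂ}
    (hU : U ∈ CliffD1 p (k + 1)) :
    ∃ u : ZMod p → Circle, U = Matrix.diagonal (fun j => (u j : ℂ)) := by
  obtain ⟨hU, hd⟩ := hU
  cases k with
  | zero =>
    obtain ⟨c, b, h⟩ := diagonal_mem_Cliff1_one hU hd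
    exact ⟨_, h⟩
  | succ k =>
    have h1 := hU.1
    rw [← hd.diagonal_diag] at h1 ⊢
    rw [Matrix.mem_unitaryGroup_iff, Matrix.star_eq_conjTranspose, Matrix.diagonal_conjTranspose,
      Matrix.diagonal_mul_diagonal, ← Matrix.diagonal_one] at h1
    have h2 := Matrix.diagonal_injective h1
    refine ⟨fun j => ⟨U.diag j, ?_⟩, rfl⟩
    have h3 := congrFun h2 j
    simp only [Pi.star_apply, Complex.star_def, Complex.mul_conj] at h3
    have h4 : Complex.normSq (U.diag j) = 1 := by exact_mod_cast h3
    rw [Submonoid.unitSphere]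
    simp only [Submonoid.mem_mk, Subsemigroup.mem_mk, mem_sphere_zero_iff_norm]
    rw [Complex.normSq_eq_norm_sq] at h4
    exact (pow_eq_one_iff_of_nonneg (norm_nonneg _) two_ne_zero).1 h4

/-! ### Newton coefficients and the gates `U_{m,b}` -/

/-- The submonoid generated by the gates `U_{M,b}`, `1 ≤ b ≤ a`. -/
noncomputable def genMonoid (p : ℕ) [NeZero p] (M a : ℕ) :
    Submonoid (Matrix (ZMod p) (ZMod p) ℂ) :=
  Submonoid.closure {V | ∃ b, 1 ≤ b ∧ b ≤ a ∧ V = Uma p M b}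

/-- The functions on `ZMod p` whose diagonal matrix lies in `genMonoid p M a`; passing to functions
makes the ambient monoid commutative. -/
noncomputable def genFun (p : ℕ) [NeZero p] (M a : ℕ) : Submonoid (ZMod p → ℂ) :=
  (genMonoid p M a).comap (Matrix.diagonalRingHom (ZMod p) ℂ : (ZMod p → ℂ) →* _)

lemma mem_genFun {M a : ℕ} {f : ZMod p → ℂ} :
    f ∈ genFun p M a ↔ Matrix.diagonal f ∈ genMonoid p M a := Iff.rfl

/-- A `p ^ M`-torsion phase is a power of `exp (2πi / p ^ M)`, so `j ↦ e ^ (j ^ b)` is a power of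
the gate `U_{M,b}`. -/
lemma pow_mem_genFun {M a b : ℕ} (hb1 : 1 ≤ b) (hb2 : b ≤ a) (e : Circle) (he : e ^ p ^ M = 1) :
    (fun j : ZMod p => ((e ^ j.val ^ b : Circle) : ℂ)) ∈ genFun p M a := by
  have hn : p ^ M ≠ 0 := pow_ne_zero _ (NeZero.ne p)
  have : NeZero (p ^ M) := ⟨hn⟩
  have hprim := Complex.isPrimitiveRoot_exp (p ^ M) hn
  obtain ⟨s, -, hs⟩ := hprim.eq_pow_of_pow_eq_one (ξ := (e : ℂ)) (by
    rw [← Circle.coe_pow, he, Circle.coe_one])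
  have hgen : (fun j : ZMod p =>
      Complex.exp (2 * Real.pi * Complex.I * ((j.val : ℂ) ^ b / (p : ℂ) ^ M))) ∈ genFun p M a := by
    rw [mem_genFun]
    refine Submonoid.subset_closure ⟨b, hb1, hb2, ?_⟩
    ext r c
    by_cases h : r = c
    · subst h; simp [Uma]
    · simp [Uma, h]
  convert Submonoid.pow_mem _ hgen s using 1
  funext j
  rw [Circle.coe_pow, ← hs, Pi.pow_apply, ← pow_mul, mul_comm s, pow_mul, ← Complex.exp_nat_mul]
  congr 2
  push_cast
  ring

open Polynomial in
/-- A Newton factor `j ↦ c ^ (j.choose i)` with `p ^ M`-torsion coefficient is a product of powers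
of the gates `U_{M,b}` with `1 ≤ b ≤ i`. -/
lemma diagonal_choose_mem (hp : p.Prime) {M a i : ℕ} (hi1 : 1 ≤ i) (hia : i ≤ a) (hip : i < p)
    (c : Circle) (hc : c ^ p ^ M = 1) :
    (fun j : ZMod p => ((c ^ j.val.choose i : Circle) : ℂ)) ∈ genFun p M a := by
  have hcop : (Nat.factorial i).Coprime (p ^ M) := by
    apply Nat.Coprime.pow_right
    exact (hp.coprime_iff_not_dvd.2 (by rw [hp.dvd_factorial]; omega)).symm
  -- an `i!`-th root of `c` which is again a power of `c`
  obtain ⟨d, hd, hdc⟩ : ∃ d : Circle, d ^ p ^ M = 1 ∧ d ^ Nat.factorial i = c := by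
    have hg : (c : Circle) ^ ((Nat.factorial i).gcd (p ^ M) : ℤ) = c := by
      rw [hcop]; simp
    rw [Nat.gcd_eq_gcd_ab, _root_.zpow_add, _root_.zpow_mul, _root_.zpow_mul, zpow_natCast c (p ^ M), hc, _root_.one_zpow,
      mul_one, zpow_natCast] at hg
    refine ⟨c ^ (Nat.factorial i).gcdA (p ^ M), ?_, ?_⟩
    · rw [← zpow_natCast, ← _root_.zpow_mul, mul_comm, _root_.zpow_mul, zpow_natCast, hc, _root_.one_zpow]
    · rw [← zpow_natCast, ← _root_.zpow_mul, mul_comm, _root_.zpow_mul, zpow_natCast, hg]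
  set q : ℤ[X] := descPochhammer ℤ i with hq
  have hq0 : q.coeff 0 = 0 := by
    rw [coeff_zero_eq_eval_zero, hq]
    have := descPochhammer_eval_eq_descFactorial ℤ 0 i
    simp only [Nat.cast_zero] at this
    rw [this, Nat.descFactorial_of_lt (by omega)]
    rfl
  have hdeg : q.natDegree = i := descPochhammer_natDegree ℤ i
  have key : (fun j : ZMod p => ((c ^ j.val.choose i : Circle) : ℂ)) =
      ∏ b ∈ Finset.Icc 1 i, fun j : ZMod p => (((d ^ q.coeff b) ^ j.val ^ b : Circle) : ℂ) := by
    funext j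
    rw [Finset.prod_apply]
    have h1 : ((j.val.descFactorial i : ℕ) : ℤ)
        = ∑ b ∈ Finset.Icc 1 i, q.coeff b * (j.val : ℤ) ^ b := by
      rw [← descPochhammer_eval_eq_descFactorial ℤ, ← hq, eval_eq_sum_range, hdeg,
        Finset.range_eq_Ico, Finset.sum_eq_sum_Ico_succ_bot (by omega), hq0, zero_mul, zero_add]
      rfl
    have h2 : c ^ j.val.choose i = ∏ b ∈ Finset.Icc 1 i, (d ^ q.coeff b) ^ j.val ^ b := by
      rw [← hdc, ← pow_mul, ← Nat.descFactorial_eq_factorial_mul_choose, ← zpow_natCast, h1]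
      have h3 : ∀ s : Finset ℕ, d ^ (∑ b ∈ s, q.coeff b * (j.val : ℤ) ^ b)
          = ∏ b ∈ s, (d ^ q.coeff b) ^ j.val ^ b := by
        intro s
        induction s using Finset.induction_on with
        | empty => simp
        | insert b s hb ih =>
          rw [Finset.sum_insert hb, Finset.prod_insert hb, _root_.zpow_add, ih, _root_.zpow_mul,
            ← zpow_natCast (d ^ q.coeff b)]
          push_cast
          rfl
      exact h3 _
    rw [h2]
    exact map_prod Circle.coeHom _ _
  rw [key]
  refine Submonoid.prod_mem _ fun b hb => ?_
  rw [Finset.mem_Icc] at hb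
  refine pow_mem_genFun hb.1 (hb.2.trans hia) _ ?_
  rw [← zpow_natCast, ← _root_.zpow_mul, mul_comm, _root_.zpow_mul, zpow_natCast, hd, _root_.one_zpow]

lemma one_mem_Dgrp (M a : ℕ) : (1 : Matrix (ZMod p) (ZMod p) ℂ) ∈ Dgrp p M a := by
  induction M generalizing a with
  | zero => exact ⟨0, by simp⟩
  | succ M ih => exact ⟨1, Submonoid.one_mem _, 0, 1, ih _, by simp⟩

end Gates

/-- For a single qudit of prime dimension `p`, every `m ≥ 1` and every
`a` with `1 ≤ a ≤ p-1`, the set `C^{(p-1)(m-1)+a}_d` of diagonal gates in level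
`(p-1)(m-1)+a` of the Clifford hierarchy is contained in the group `D_{m,a}`. -/
theorem diagonal_clifford_subset_Dgrp (p m a : ℕ) [NeZero p] (hp : p.Prime) (hm : 1 ≤ m)
    (ha1 : 1 ≤ a) (ha2 : a ≤ p - 1) :
    CliffD1 p ((p - 1) * (m - 1) + a) ⊆ Dgrp p m a := by
  intro U hU
  obtain ⟨m, rfl⟩ : ∃ m', m = m' + 1 := ⟨m - 1, by omega⟩
  obtain ⟨a, rfl⟩ : ∃ a', a = a' + 1 := ⟨a - 1, by omega⟩
  rw [Nat.add_sub_cancel, ← add_assoc] at hU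
  obtain ⟨u, rfl⟩ := exists_diagonal_of_mem_CliffD1 _ hU
  have hu := fdiff_pow_of_mem_Cliff1 _ u hU.1
  have hp1 := hp.one_lt
  set T := fdiff p (Additive Circle) with hT
  set f : ZMod p → Additive Circle := fun j => Additive.ofMul (u j) with hf
  set c : ℕ → Circle := fun i => Additive.toMul ((T ^ i) f 0) with hcdef
  have hsucc : ∀ i, T ((T ^ i) f) = (T ^ (i + 1)) f := fun i => by
    rw [pow_succ', Module.End.mul_apply]
  have hvan : ∀ n, (p - 1) * m + a + 2 ≤ n → (T ^ n) f = 0 := fun n hn => by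
    obtain ⟨l, rfl⟩ := Nat.exists_eq_add_of_le' hn
    rw [pow_add, Module.End.mul_apply, hu, map_zero]
  have htor : ∀ t i, (p - 1) * m + a + 2 ≤ (p - 1) * t + 1 + i → c (i + 1) ^ p ^ t = 1 := by
    intro t i h
    have h1 := fdiff_torsion hp t ((T ^ i) f) (by
      rw [← hT, ← Module.End.mul_apply, ← pow_add]
      exact hvan _ h)
    rw [← hT, hsucc] at h1
    have h2 := congrArg Additive.toMul (congrFun h1 0)
    simpa [hcdef] using h2
  -- `c i` is the `i`-th Newton coefficient of `u`, written multiplicatively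
  have hexp : ∀ j, u j = ∏ i ∈ Finset.range p, c i ^ j.val.choose i := by
    intro j
    have h := congrArg Additive.toMul (newton_expansion f j)
    rw [toMul_sum] at h
    simpa [hf, hcdef] using h
  have hG : (∏ i ∈ Finset.Ico 1 (a + 2), fun j : ZMod p => ((c i ^ j.val.choose i : Circle) : ℂ))
      ∈ genFun p (m + 1) (a + 1) := by
    refine Submonoid.prod_mem _ fun i hi => ?_
    rw [Finset.mem_Ico] at hi
    refine diagonal_choose_mem hp hi.1 (by omega) (by omega) _ ?_
    obtain ⟨i, rfl⟩ : ∃ i', i = i' + 1 := ⟨i - 1, by omega⟩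
    apply htor
    rw [mul_add]
    omega
  have hDtor : ∀ i ∈ Finset.Ico (a + 2) p, c i ^ p ^ m = 1 := by
    intro i hi
    rw [Finset.mem_Ico] at hi
    obtain ⟨i, rfl⟩ : ∃ i', i = i' + 1 := ⟨i - 1, by omega⟩
    apply htor
    omega
  have hD : Matrix.diagonal (∏ i ∈ Finset.Ico (a + 2) p,
      fun j : ZMod p => ((c i ^ j.val.choose i : Circle) : ℂ)) ∈ Dgrp p m (p - 1) := by
    cases m with
    | zero =>
      rw [Finset.prod_eq_one]
      · exact ⟨0, by simp⟩
      · intro i hi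
        have := hDtor i hi
        rw [pow_zero, pow_one] at this
        funext j
        simp [this]
    | succ m =>
      refine ⟨_, mem_genFun.1 (?_ : _ ∈ genFun p (m + 1) (p - 1)), 0, 1, one_mem_Dgrp _ _,
        by rw [mul_one, Complex.ofReal_zero, zero_mul, Complex.exp_zero, one_smul]⟩
      refine Submonoid.prod_mem _ fun i hi => ?_
      have hi' := Finset.mem_Ico.1 hi
      exact diagonal_choose_mem hp (by omega) (by omega) (by omega) _ (hDtor i hi)
  -- the coefficient of index `0` is the global phase
  refine ⟨_, mem_genFun.1 hG, Complex.arg (c 0), _, hD, ?_⟩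
  have hphase : Complex.exp (Complex.arg (c 0) * Complex.I) = c 0 := by
    rw [← Circle.coe_exp, Circle.exp_arg]
  rw [hphase, Matrix.diagonal_mul_diagonal, ← Matrix.diagonal_smul]
  congr 1
  funext j
  rw [Pi.smul_apply, ← Pi.mul_apply, Finset.prod_Ico_consecutive _ (by omega) (by omega), hexp j,
    Finset.range_eq_Ico, Finset.prod_eq_prod_Ico_succ_bot (by omega), Finset.prod_apply]
  simp only [Nat.choose_zero_right, pow_one, smul_eq_mul, Circle.coe_mul]
  congr 1
  exact map_prod Circle.coeHom _ _
end

section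
/- For a single qudit of prime dimension p, any m > 1 and any a with 1 ≤ a ≤ p−1, the group C^{(p−1)(m−1)+a}_d of diagonal gates in level (p−1)(m−1)+a of the Clifford hierarchy is isomorphic to U(1) × (Z_{p^m})^a × (Z_{p^{m−1}})^{p−a−1}, where the U(1) factor corresponds to global phases. -/
open Matrix Complex

/-!
A diagonal gate is a function `u : ZMod p → U(1)`; write `U(1)` additively and let `Δ` be the
forward difference with step `1`. Monomial unitaries `diag(u) X^s` are closed under conjugation, and
conjugating `X` replaces `u` by a shift of `Δ u`. By induction the diagonal gates of level `k` are
exactly the solutions of `Δ^(k+1) u = 0` (`DiagClifford.cliff_iff`); at level one these are the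
affine phases, which are the Paulis up to a global phase.

A function on `ZMod p` is freely determined by its Newton coefficients `c i = (Δ^i u) 0`, `i < p`,
via `u r = ∑ (r choose i) • c i`. It remains to read `Δ^(k+1) u = 0` in these coordinates. Since the
shift `1 + Δ` has order `p`, the binomial theorem gives `Δ^p = -p Δ (1 + Δ w)` for a polynomial `w`
in `Δ`, and `1 + Δ w` is injective on elements killed by a power of `Δ`. Hence, for
`k = (p-1)(m-1) + a`, the equation `Δ^(k+1) u = 0` is equivalent to `p^(m-1) Δ^(a+1) u = 0`, and then
also `p^m Δ u = 0`. In coordinates (`DiagClifford.iter_eq_zero_iff`) this says that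
`c 1, …, c a` are `p^m`-torsion, `c (a+1), …, c (p-1)` are `p^(m-1)`-torsion, and `c 0`, the global
phase, is arbitrary. The `N`-torsion of `U(1)` is `Z_N`, which yields the isomorphism.
-/

namespace DiagClifford
open Polynomial

/-! ### Modules on which `d ^ p = -p d (1 + d w)` -/

section Algebra
variable {R M : Type*} [CommRing R] [AddCommGroup M] [Module R M]

/-- `1 + d w` acts injectively on elements killed by a power of `d`: it is unipotent there. -/
lemma eq_zero_of_unipotent {d w : R} {n : ℕ} {h : M} (hn : d ^ n • h = 0)
    (hu : (1 + d * w) • h = 0) : h = 0 := by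
  have h1 : h = (-(d * w)) • h := by
    rw [add_smul, one_smul] at hu
    rw [neg_smul]; exact eq_neg_of_add_eq_zero_left hu
  have h2 : ∀ k : ℕ, h = (-(d * w)) ^ k • h := by
    intro k
    induction k with
    | zero => simp
    | succ k ih => rw [pow_succ, mul_smul, ← h1]; exact ih
  rw [h2 n, show (-(d * w)) ^ n = ((-w) ^ n) * d ^ n by rw [← mul_pow]; ring, mul_smul, hn,
    smul_zero]

lemma eq_zero_of_unipotent_pow {d w : R} {n : ℕ} (k : ℕ) {h : M} (hn : d ^ n • h = 0)
    (hu : (1 + d * w) ^ k • h = 0) : h = 0 := by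
  induction k with
  | zero => simpa using hu
  | succ k ih =>
    apply ih
    rw [pow_succ', mul_smul] at hu
    refine eq_zero_of_unipotent (n := n) ?_ hu
    rw [smul_comm, hn, smul_zero]

variable {d w : R} {p : ℕ}
  (hd : ∀ f : M, d ^ p • f = (-(p * d * (1 + d * w))) • f)
include hd

/-- Trading `n` blocks of `d ^ (p - 1)` for `p ^ n`, up to a power of the unipotent factor; the
exponent `b + 1 ≥ 1` is needed because the relation only rewrites `d ^ p`. -/
lemma pow_smul_eq (hp : 1 ≤ p) (n b : ℕ) (f : M) :
    d ^ ((p - 1) * n + b + 1) • f = ((-(1 + d * w)) ^ n * (p ^ n * d ^ (b + 1))) • f := by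
  induction n generalizing b with
  | zero => simp
  | succ n ih =>
    have e : (p - 1) * (n + 1) + b + 1 = (p - 1) * n + (p - 1 + b) + 1 := by ring
    rw [e, ih, show p - 1 + b + 1 = p + b by omega, pow_add, mul_smul, mul_smul, mul_smul _ _ f,
      hd]
    simp only [← mul_smul]
    congr 1
    ring

/-- An element killed by `d ^ ((p - 1) n + a + 1)` satisfies the two torsion conditions. -/
lemma forward (hp : 1 ≤ p) {n a : ℕ} (ha : a + 1 ≤ p) {f : M}
    (hf : d ^ ((p - 1) * n + a + 1) • f = 0) :
    ((p : R) ^ n * d ^ (a + 1)) • f = 0 ∧ ((p : R) ^ (n + 1) * d) • f = 0 := by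
  have h1 : ((p : R) ^ n * d ^ (a + 1)) • f = 0 := by
    apply eq_zero_of_unipotent_pow (d := d) (w := w) (n := (p - 1) * n + a + 1) n
    · rw [smul_comm, hf, smul_zero]
    · have := pow_smul_eq hd hp n a f
      rw [hf, neg_pow, mul_assoc, mul_smul] at this
      rcases neg_one_pow_eq_or R n with h | h <;> rw [h] at this
      · rw [← mul_smul]; simpa using this.symm
      · rw [← mul_smul]; simpa using this.symm
  refine ⟨h1, ?_⟩
  apply eq_zero_of_unipotent (d := d) (w := w) (n := (p - 1) * n + a + 1)
  · rw [smul_comm, hf, smul_zero]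
  · have h2 : (d ^ p * (p : R) ^ n) • f = 0 := by
      obtain ⟨c, hc⟩ := Nat.exists_eq_add_of_le ha
      rw [show d ^ p * (p : R) ^ n = d ^ c * ((p : R) ^ n * d ^ (a + 1)) by
        rw [hc]; push_cast; ring, mul_smul, h1, smul_zero]
    rw [mul_smul, hd, ← mul_smul, neg_mul, neg_smul, neg_eq_zero] at h2
    rw [← mul_smul, ← h2]
    congr 1
    ring

lemma backward (hp : 1 ≤ p) {n a : ℕ} {f : M} (h : ((p : R) ^ n * d ^ (a + 1)) • f = 0) :
    d ^ ((p - 1) * n + a + 1) • f = 0 := by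
  rw [pow_smul_eq hd hp, mul_smul, h, smul_zero]

end Algebra

/-- The binomial theorem for `(1 + X) ^ p`, with the divisibility of the middle coefficients by `p`
made explicit. -/
lemma exists_expansion {p : ℕ} (hp : p.Prime) :
    ∃ w : ℤ[X], ((1 : ℤ[X]) + X) ^ p = 1 + X ^ p + (p : ℤ[X]) * X * (1 + X * w) := by
  set S : ℤ[X] := ∑ k ∈ Finset.Ioo 0 p,
    X ^ (k - 1) * 1 ^ (p - k - 1) * (↑(p.choose k / p) : ℤ[X]) with hS
  have h0 : (S - 1).coeff 0 = 0 := by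
    rw [coeff_sub, hS, finsetSum_coeff, Finset.sum_eq_single 1]
    · simp [Nat.div_self hp.pos]
    · intro k hk hk1
      rw [Finset.mem_Ioo] at hk
      obtain ⟨j, rfl⟩ : ∃ j, k = j + 2 := ⟨k - 2, by omega⟩
      simp [pow_succ, mul_assoc, mul_coeff_zero]
    · intro h
      exact absurd (Finset.mem_Ioo.2 ⟨one_pos, hp.one_lt⟩) h
  obtain ⟨w, hw⟩ := X_dvd_iff.2 h0
  refine ⟨w, ?_⟩
  rw [← hw, add_comm (1 : ℤ[X]) X, add_pow_prime_eq hp, ← hS]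
  ring

open fwdDiff Finset

/-! ### Forward differences on `ZMod p` -/

section Functions
variable {p : ℕ} {G : Type*} [AddCommGroup G]

lemma newton (f : ZMod p → G) (n : ℕ) :
    f n = ∑ k ∈ range (n + 1), n.choose k • (Δ_[1])^[k] f 0 := by
  simpa using shift_eq_sum_fwdDiff_iter (1 : ZMod p) f n 0

lemma eq_zero_of_iter [NeZero p] {f : ZMod p → G} (h : ∀ k, (Δ_[1])^[k] f 0 = 0) : f = 0 := by
  funext j
  rw [← ZMod.natCast_zmod_val j, newton f]
  simp [h]

lemma eq_const_of_fwdDiff [NeZero p] {f : ZMod p → G} (h : Δ_[1] f = 0) (j : ZMod p) :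
    f j = f 0 := by
  rw [← ZMod.natCast_zmod_val j]
  induction j.val with
  | zero => simp
  | succ n ih =>
    have := congrFun h (n : ZMod p)
    simp only [fwdDiff, Pi.zero_apply, sub_eq_zero] at this
    push_cast
    rw [this, ih]

/-- The kernel of a power of `Δ` in Newton coordinates: `f` is killed by `Δ^((p-1)n+a+1)` iff its
Newton coefficients of index `1, …, a` are `p^(n+1)`-torsion and those of index `a+1, …, p-1` are
`p^n`-torsion. The coefficient of index `0` is unconstrained. -/
lemma iter_eq_zero_iff [NeZero p] (hp : p.Prime) {n a : ℕ} (ha : a + 1 ≤ p) (f : ZMod p → G) :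
    (Δ_[1])^[(p - 1) * n + a + 1] f = 0 ↔
      (∀ i, 1 ≤ i → i ≤ a → p ^ (n + 1) • (Δ_[1])^[i] f 0 = 0) ∧
      (∀ i, a < i → i < p → p ^ n • (Δ_[1])^[i] f 0 = 0) := by
  let D : Module.End ℤ (ZMod p → G) := fwdDiff_aux.fwdDiffₗ (ZMod p) G 1
  -- `X` acts as `Δ`, so `1 + X` acts as the shift, whose `p`-th power is the identity.
  let _ : Module ℤ[X] (ZMod p → G) := Module.compHom _ (aeval D).toRingHom
  have hsm : ∀ (q : ℤ[X]) (g : ZMod p → G), q • g = aeval D q g := fun q g => rfl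
  have hX : ∀ (k : ℕ) (g : ZMod p → G), (X ^ k : ℤ[X]) • g = (Δ_[1])^[k] g := by
    intro k g
    rw [hsm, map_pow, aeval_X]
    exact congrFun (fwdDiff_aux.coe_fwdDiffₗ_pow (1 : ZMod p) k) g
  have hX1 : ∀ (g : ZMod p → G), (X : ℤ[X]) • g = Δ_[1] g := by
    intro g; simpa using hX 1 g
  have hnat : ∀ (k : ℕ) (g : ZMod p → G), (k : ℤ[X]) • g = k • g := by
    intro k g
    exact Nat.cast_smul_eq_nsmul _ _ _
  obtain ⟨w, hw⟩ := exists_expansion hp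
  have hshift : ∀ g : ZMod p → G, ((1 + X) ^ p : ℤ[X]) • g = g := by
    intro g
    rw [hsm, map_pow, map_add, aeval_X, map_one]
    funext y
    have := fwdDiff_aux.shiftₗ_pow_apply (1 : ZMod p) g p y
    rw [fwdDiff_aux.shiftₗ, add_comm] at this
    simpa [D] using this
  have hd : ∀ g : ZMod p → G, (X ^ p : ℤ[X]) • g = (-((p : ℤ[X]) * X * (1 + X * w))) • g := by
    intro g
    have := hshift g
    rw [hw, add_smul, add_smul, one_smul, add_assoc, add_eq_left] at this
    rw [neg_smul]
    exact eq_neg_of_add_eq_zero_left this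
  have hpow : ∀ (k i : ℕ) (g : ZMod p → G),
      ((p : ℤ[X]) ^ k * X ^ i) • g = p ^ k • (Δ_[1])^[i] g := by
    intro k i g
    rw [mul_smul, hX, ← Nat.cast_pow, hnat]
  rw [← hX]
  constructor
  · intro h
    obtain ⟨h1, h2⟩ := forward hd hp.one_le ha h
    constructor
    · intro i hi _
      obtain ⟨j, rfl⟩ := Nat.exists_eq_add_of_le' hi
      have : ((p : ℤ[X]) ^ (n + 1) * X ^ (j + 1)) • f = 0 := by
        rw [show ((p : ℤ[X]) ^ (n + 1) * X ^ (j + 1)) = X ^ j * ((p : ℤ[X]) ^ (n + 1) * X) by ring,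
          mul_smul, h2, smul_zero]
      rw [hpow] at this
      exact congrFun this 0
    · intro i hi _
      obtain ⟨j, rfl⟩ := Nat.exists_eq_add_of_le' (Nat.succ_le_of_lt hi)
      have : ((p : ℤ[X]) ^ n * X ^ (j + (a + 1))) • f = 0 := by
        rw [show ((p : ℤ[X]) ^ n * X ^ (j + (a + 1))) = X ^ j * ((p : ℤ[X]) ^ n * X ^ (a + 1)) by
          ring, mul_smul, h1, smul_zero]
      rw [hpow] at this
      exact congrFun this 0
  · rintro ⟨h1, h2⟩
    apply backward hd hp.one_le
    have hall : ∀ i, 1 ≤ i → i < p → p ^ (n + 1) • (Δ_[1])^[i] f 0 = 0 := by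
      intro i hi hip
      by_cases hia : i ≤ a
      · exact h1 i hi hia
      · rw [pow_succ', mul_smul, h2 i (by omega) hip, smul_zero]
    -- By Newton's formula `p ^ (n + 1) • f` is constant, so `Δ ^ p` kills `p ^ n • f` and only the
    -- differences of order below `p` remain to be checked.
    have hconst : Δ_[1] (p ^ (n + 1) • f) = 0 := by
      have : p ^ (n + 1) • f = fun _ => p ^ (n + 1) • f 0 := by
        funext j
        have hj := ZMod.val_lt j
        have := newton f j.val
        rw [ZMod.natCast_zmod_val] at this
        rw [Pi.smul_apply, this, Finset.sum_range_succ', smul_add]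
        simp only [Function.iterate_zero, id, Nat.choose_zero_right, one_smul]
        rw [add_eq_right, Finset.smul_sum]
        refine Finset.sum_eq_zero fun k hk => ?_
        rw [smul_comm, hall (k + 1) (by omega) (by rw [mem_range] at hk; omega), smul_zero]
      rw [this, fwdDiff_const]; rfl
    have hp' : (X ^ p : ℤ[X]) • (p ^ n • f) = 0 := by
      rw [hd, show (-((p : ℤ[X]) * X * (1 + X * w))) = (-(1 + X * w)) * X * (p : ℤ[X]) by ring,
        mul_smul, mul_smul, hnat, ← mul_smul p, ← pow_succ', hX1, hconst, smul_zero]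
    rw [hpow]
    apply eq_zero_of_iter
    intro k
    rw [← fwdDiff_iter_const_smul, ← Function.iterate_add_apply]
    by_cases hk : k + (a + 1) < p
    · rw [fwdDiff_iter_const_smul]
      exact h2 _ (by omega) hk
    · obtain ⟨c, hc⟩ := Nat.exists_eq_add_of_le' (not_lt.1 hk)
      rw [hc, ← hX, pow_add, mul_smul, hp', smul_zero]
      rfl

end Functions
end DiagClifford

/-! ### Monomial matrices and the Clifford hierarchy -/

namespace DiagClifford
open fwdDiff Finset

section Monomial
variable {p : ℕ} [NeZero p]

omit [NeZero p] in
lemma iter_shift {G : Type*} [AddCommGroup G] (f : ZMod p → G) (s : ZMod p) (n : ℕ) :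
    (Δ_[(1 : ZMod p)])^[n] (fun r => f (r - s)) = fun r => (Δ_[1])^[n] f (r - s) := by
  funext r
  simpa [sub_eq_add_neg] using fwdDiff_iter_comp_add (1 : ZMod p) f (-s) n r

/-- The monomial unitary `diag(u) X^s`, with the phases `u` written additively so that forward
differences apply to them. -/
noncomputable def monoMat (u : ZMod p → Additive Circle) (s : ZMod p) :
    Matrix (ZMod p) (ZMod p) ℂ :=
  Matrix.of fun r c => if r = c + s then ((u r).toMul : ℂ) else 0

omit [NeZero p] in
lemma monoMat_apply (u : ZMod p → Additive Circle) (s r c : ZMod p) :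
    monoMat u s r c = if r = c + s then ((u r).toMul : ℂ) else 0 := rfl

lemma monoMat_mul (u v : ZMod p → Additive Circle) (s t : ZMod p) :
    monoMat u s * monoMat v t = monoMat (fun r => u r + v (r - s)) (s + t) := by
  ext r c
  rw [Matrix.mul_apply, Finset.sum_eq_single (r - s)]
  · simp only [monoMat_apply, sub_add_cancel, if_true, sub_eq_iff_eq_add]
    rw [add_assoc, add_comm t s]
    split_ifs <;> simp
  · intro j _ hj
    rw [monoMat_apply, if_neg, zero_mul]
    rintro rfl
    simp at hj
  · simp

omit [NeZero p] in
lemma monoMat_conjTranspose (u : ZMod p → Additive Circle) (s : ZMod p) :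
    (monoMat u s)ᴴ = monoMat (fun r => -u (r + s)) (-s) := by
  ext r c
  simp only [Matrix.conjTranspose_apply, monoMat_apply, ← sub_eq_add_neg, eq_sub_iff_add_eq]
  by_cases h : c = r + s
  · rw [if_pos h, if_pos h.symm, h, toMul_neg, Circle.coe_inv_eq_conj]
    rfl
  · rw [if_neg h, if_neg (Ne.symm h), star_zero]

omit [NeZero p] in
lemma monoMat_zero : monoMat (0 : ZMod p → Additive Circle) 0 = 1 := by
  ext r c
  simp [monoMat_apply, Matrix.one_apply]

omit [NeZero p] in
lemma monoMat_inj {u v : ZMod p → Additive Circle} {s t : ZMod p}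
    (h : monoMat u s = monoMat v t) : u = v ∧ s = t := by
  have key : ∀ r, u r = v r ∧ s = t := by
    intro r
    have := congrFun (congrFun h r) (r - s)
    rw [monoMat_apply, if_pos (by ring), monoMat_apply] at this
    split_ifs at this with h1
    · refine ⟨?_, ?_⟩
      · exact Circle.coe_injective this
      · have h2 : r - s + s = r - s + t := by rw [← h1]; ring
        exact add_left_cancel h2
    · exact absurd this (Circle.coe_ne_zero _)
  exact ⟨funext fun r => (key r).1, (key 0).2⟩

omit [NeZero p] in
lemma smul_monoMat (z : Circle) (u : ZMod p → Additive Circle) (s : ZMod p) :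
    (z : ℂ) • monoMat u s = monoMat (fun r => Additive.ofMul z + u r) s := by
  ext r c
  simp only [Matrix.smul_apply, monoMat_apply]
  split_ifs <;> simp

lemma monoMat_mem_unitary (u : ZMod p → Additive Circle) (s : ZMod p) :
    monoMat u s ∈ Matrix.unitaryGroup (ZMod p) ℂ := by
  rw [Matrix.mem_unitaryGroup_iff, Matrix.star_eq_conjTranspose, monoMat_conjTranspose,
    monoMat_mul, ← monoMat_zero]
  congr 1
  · funext r; simp
  · simp

lemma Xmat1_eq : Xmat1 p = monoMat 0 1 := by
  ext r c
  simp [Xmat1, monoMat_apply]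

lemma Zmat1_eq : Zmat1 p = monoMat (fun r => Additive.ofMul (ZMod.toCircle r)) 0 := by
  ext r c
  simp only [Zmat1, monoMat_apply, Matrix.of_apply, add_zero, toMul_ofMul]
  by_cases h : r = c
  · rw [if_pos h, if_pos h, h, ZMod.toCircle_apply, mul_div_assoc]
  · rw [if_neg h, if_neg h]

omit [NeZero p] in
lemma exists_pauliPhase : ∃ z : Circle, pauliPhase p = z := by
  unfold pauliPhase
  split_ifs
  · exact ⟨⟨Complex.I, by simp [Submonoid.unitSphere]⟩, rfl⟩
  · refine ⟨Circle.exp (2 * Real.pi / p), ?_⟩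
    rw [Circle.coe_exp]
    congr 1
    push_cast
    ring

/-- Every Pauli is `diag(u) X^s` with `u` affine, i.e. `Δ² u = 0`. -/
lemma exists_of_mem_pauli {P : Matrix (ZMod p) (ZMod p) ℂ} (hP : P ∈ Pauli1 p) :
    ∃ (u : ZMod p → Additive Circle) (s : ZMod p),
      (Δ_[(1 : ZMod p)])^[2] u = 0 ∧ P = monoMat u s := by
  refine Submonoid.closure_induction (motive := fun P _ => ∃ (u : ZMod p → Additive Circle)
    (s : ZMod p), (Δ_[(1 : ZMod p)])^[2] u = 0 ∧ P = monoMat u s) ?_ ?_ ?_ hP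
  · rintro Q (rfl | rfl | rfl)
    · obtain ⟨z, hz⟩ := exists_pauliPhase (p := p)
      refine ⟨fun _ => Additive.ofMul z + 0, 0, ?_, ?_⟩
      · funext r; simp [fwdDiff]
      · rw [hz, ← monoMat_zero, smul_monoMat]; rfl
    · refine ⟨0, 1, ?_, Xmat1_eq⟩
      funext r; simp [fwdDiff]
    · refine ⟨_, 0, ?_, Zmat1_eq⟩
      funext r
      simp [fwdDiff, AddChar.map_add_eq_mul]
  · exact ⟨0, 0, by funext r; simp [fwdDiff], monoMat_zero.symm⟩
  · rintro _ _ _ _ ⟨u, s, hu, rfl⟩ ⟨v, t, hv, rfl⟩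
    refine ⟨_, _, ?_, monoMat_mul u v s t⟩
    rw [show (fun r => u r + v (r - s)) = u + fun r => v (r - s) from rfl, fwdDiff_iter_add,
      iter_shift, hu, hv]
    funext r; simp

lemma X_pow (n : ℕ) : Xmat1 p ^ n = monoMat 0 (n : ZMod p) := by
  induction n with
  | zero => simp [monoMat_zero]
  | succ n ih =>
    rw [pow_succ, ih, Xmat1_eq, monoMat_mul]
    push_cast
    congr 1
    funext r; simp

lemma Z_pow (n : ℕ) :
    Zmat1 p ^ n = monoMat (fun r => n • Additive.ofMul (ZMod.toCircle r)) 0 := by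
  induction n with
  | zero => simp only [pow_zero, zero_smul]; exact monoMat_zero.symm
  | succ n ih =>
    rw [pow_succ, ih, Zmat1_eq, monoMat_mul]
    congr 1
    · funext r; rw [sub_zero, succ_nsmul]
    · simp

lemma exists_toCircle {n : ℕ} [NeZero n] {z : Circle} (hz : z ^ n = 1) :
    ∃ b : ZMod n, ZMod.toCircle b = z := by
  obtain ⟨b, hb⟩ := (bijective_rootsOfUnityAddChar n).2
    ⟨toUnits z, by
      rw [_root_.mem_rootsOfUnity, ← map_pow, hz, map_one]⟩
  refine ⟨b, ?_⟩
  have := congrArg (fun x => ((x.val : Circleˣ) : Circle)) hb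
  simpa using this

/-- Level one consists, among monomial unitaries, of those with affine phases: if `Δ u` is constant
then this constant is a `p`-th root of unity because `u` is `p`-periodic, so `diag(u)` is a phase
times a power of `Z`. -/
lemma cliff_one_iff (u : ZMod p → Additive Circle) (s : ZMod p) :
    monoMat u s ∈ Cliff1 p 1 ↔ (Δ_[(1 : ZMod p)])^[2] u = 0 := by
  constructor
  · rintro ⟨φ, P, hP, h⟩
    obtain ⟨v, t, hv, rfl⟩ := exists_of_mem_pauli hP
    rw [← Circle.coe_exp, smul_monoMat] at h
    obtain ⟨rfl, rfl⟩ := monoMat_inj h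
    rw [show (fun r => Additive.ofMul (Circle.exp φ) + v r) =
      (fun _ => Additive.ofMul (Circle.exp φ)) + v from rfl, fwdDiff_iter_add, hv, add_zero]
    funext r; simp [fwdDiff]
  · intro h
    have hc := eq_const_of_fwdDiff (f := Δ_[(1 : ZMod p)] u) h
    set g := Δ_[(1 : ZMod p)] u 0
    have hu : ∀ n : ℕ, u n = u 0 + n • g := by
      intro n
      induction n with
      | zero => simp
      | succ n ih =>
        have := hc n
        simp only [fwdDiff, sub_eq_iff_eq_add] at this
        push_cast
        rw [this, ih, succ_nsmul]; abel
    have hg : g.toMul ^ p = 1 := by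
      have := hu p
      rw [ZMod.natCast_self, left_eq_add] at this
      exact this
    obtain ⟨b, hb⟩ := exists_toCircle hg
    obtain ⟨φ, hφ⟩ := Circle.exp_surjective (u 0).toMul
    refine ⟨φ, Zmat1 p ^ b.val * Xmat1 p ^ s.val, ?_, ?_⟩
    · exact mul_mem (pow_mem (Submonoid.subset_closure (by simp)) _)
        (pow_mem (Submonoid.subset_closure (by simp)) _)
    · rw [← Circle.coe_exp, Z_pow, X_pow, monoMat_mul, smul_monoMat]
      congr 1
      · funext r
        have h1 := hu r.val
        rw [ZMod.natCast_zmod_val] at h1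
        rw [h1, hφ]
        simp only [ofMul_toMul, Pi.zero_apply, add_zero, add_right_inj]
        rw [← ofMul_pow, ← AddChar.map_nsmul_eq_pow, ← ofMul_toMul g, ← hb, ← ofMul_pow,
          ← AddChar.map_nsmul_eq_pow]
        congr 2
        rw [nsmul_eq_mul, nsmul_eq_mul, ZMod.natCast_zmod_val, ZMod.natCast_zmod_val, mul_comm]
      · simp

/-- Monomial unitaries in level `k + 1` are those whose phases are killed by `Δ^(k+2)`.
Conjugating `diag(v) X^t` by `diag(u) X^s` gives the phases `u + v(· - s) - u(· - t)`; the `v` term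
is affine, and for `t = 1` the difference `u - u(· - 1)` is a shift of `Δ u`. -/
lemma cliff_iff (k : ℕ) (u : ZMod p → Additive Circle) (s : ZMod p) :
    monoMat u s ∈ Cliff1 p (k + 1) ↔ (Δ_[(1 : ZMod p)])^[k + 2] u = 0 := by
  induction k generalizing u s with
  | zero => exact cliff_one_iff u s
  | succ k ih =>
    have conj : ∀ (v : ZMod p → Additive Circle) (t : ZMod p),
        monoMat u s * monoMat v t * (monoMat u s)ᴴ =
          monoMat (u + (fun r => v (r - s)) + -(fun r => u (r - t))) t := by
      intro v t
      rw [monoMat_conjTranspose, monoMat_mul, monoMat_mul]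
      congr 1
      · funext r
        simp only [Pi.add_apply, Pi.neg_apply]
        congr 3
        abel
      · abel
    have iter_neg : ∀ (n : ℕ) (f : ZMod p → Additive Circle),
        (Δ_[(1 : ZMod p)])^[n] (-f) = -(Δ_[(1 : ZMod p)])^[n] f := by
      intro n f
      have := fwdDiff_iter_const_smul (1 : ZMod p) (-1 : ℤ) f n
      simpa using this
    change (monoMat u s ∈ Matrix.unitaryGroup (ZMod p) ℂ ∧
      ∀ P ∈ Pauli1 p, monoMat u s * P * (monoMat u s)ᴴ ∈ Cliff1 p (k + 1)) ↔ _
    constructor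
    · rintro ⟨-, h⟩
      have h1 := h (Xmat1 p) (Submonoid.subset_closure (by simp))
      rw [Xmat1_eq, conj, ih, fwdDiff_iter_add, fwdDiff_iter_add, iter_neg, iter_shift,
        iter_shift] at h1
      rw [Function.iterate_succ_apply']
      funext r
      have h2 := congrFun h1 (r + 1)
      have h3 : (Δ_[(1 : ZMod p)])^[k + 2] (0 : ZMod p → Additive Circle) = 0 := by
        simpa using fwdDiff_iter_const_smul (1 : ZMod p) (0 : ℤ) (0 : ZMod p → Additive Circle)
          (k + 2)
      rw [h3] at h2
      simpa [fwdDiff, sub_eq_add_neg] using h2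
    · intro h
      refine ⟨monoMat_mem_unitary u s, fun P hP => ?_⟩
      obtain ⟨v, t, hv, rfl⟩ := exists_of_mem_pauli hP
      rw [conj, ih, fwdDiff_iter_add, fwdDiff_iter_add, iter_neg, iter_shift, iter_shift]
      -- `Δ^(k+2) u` is constant, hence agrees with its shift by `t`.
      rw [Function.iterate_succ_apply'] at h
      have h3 : (Δ_[(1 : ZMod p)])^[k + 2] v = 0 := by
        rw [Function.iterate_add_apply, hv]
        simpa using fwdDiff_iter_const_smul (1 : ZMod p) (0 : ℤ) (0 : ZMod p → Additive Circle) k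
      funext r
      have h4 := eq_const_of_fwdDiff h
      simp only [h3, Pi.add_apply, Pi.neg_apply, Pi.zero_apply]
      rw [h4 r, h4 (r - t)]
      simp

lemma mem_cliffD1_iff (k : ℕ) (U : Matrix (ZMod p) (ZMod p) ℂ) :
    U ∈ CliffD1 p (k + 2) ↔ ∃ u : ZMod p → Additive Circle,
      (Δ_[(1 : ZMod p)])^[k + 3] u = 0 ∧ U = monoMat u 0 := by
  constructor
  · rintro ⟨hU, hdiag⟩
    have hun := hU.1
    have hnorm : ∀ r, ‖U r r‖ = 1 := by
      intro r
      rw [Matrix.mem_unitaryGroup_iff, ← hdiag.diagonal_diag, Matrix.star_eq_conjTranspose,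
        Matrix.diagonal_conjTranspose, Matrix.diagonal_mul_diagonal] at hun
      have := congrFun (congrFun hun r) r
      simp only [Matrix.diagonal_apply_eq, Matrix.one_apply_eq, Matrix.diag_apply, Pi.star_apply]
        at this
      rw [Complex.star_def, Complex.mul_conj, Complex.normSq_eq_norm_sq] at this
      have h2 : ‖U r r‖ ^ 2 = 1 := by exact_mod_cast this
      exact (pow_eq_one_iff_of_nonneg (norm_nonneg _) two_ne_zero).1 h2
    have hmono : U = monoMat (fun r => Additive.ofMul
        (⟨U r r, mem_sphere_zero_iff_norm.2 (hnorm r)⟩ : Circle)) 0 := by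
      ext r c
      rw [monoMat_apply, add_zero]
      split_ifs with h
      · rw [h]; rfl
      · exact hdiag h
    refine ⟨_, ?_, hmono⟩
    rw [hmono] at hU
    exact (cliff_iff (k + 1) _ 0).1 hU
  · rintro ⟨u, hu, rfl⟩
    refine ⟨(cliff_iff (k + 1) u 0).2 hu, fun r c h => ?_⟩
    exact if_neg (by simpa using h)

end Monomial
end DiagClifford

/-! ### Newton coordinates and roots of unity -/

namespace DiagClifford
open fwdDiff Finset

section Newton
variable {p : ℕ} [NeZero p] {G : Type*} [AddCommGroup G]

/-- The function on `ZMod p` with Newton coefficients `c 0, …, c (p - 1)`, namely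
`r ↦ ∑ i < p, (r choose i) • c i`, where `r` is represented by its residue in `[0, p)`.
Other values of `c` play no role. -/
def newtonSum (p : ℕ) (c : ℕ → G) (r : ZMod p) : G := ∑ i ∈ range p, r.val.choose i • c i

/-- Newton's interpolation formula, with all `p` terms. -/
lemma newtonSum_iter (u : ZMod p → G) :
    newtonSum p (fun i => (Δ_[(1 : ZMod p)])^[i] u 0) = u := by
  funext r
  have h := newton u r.val
  rw [ZMod.natCast_zmod_val] at h
  rw [h, newtonSum]
  refine (Finset.sum_subset (range_subset_range.2 (ZMod.val_lt r)) fun k _ hk => ?_).symm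
  rw [Nat.choose_eq_zero_of_lt (by simpa using hk), zero_smul]

omit [NeZero p] in
/-- The coefficients of a Newton sum are recovered as its iterated differences at `0`, so the
values `c 0, …, c (p - 1)` are free parameters for functions on `ZMod p`. -/
lemma iter_newtonSum (c : ℕ → G) {i : ℕ} (hi : i < p) :
    (Δ_[(1 : ZMod p)])^[i] (newtonSum p c) 0 = c i := by
  induction i using Nat.strong_induction_on with
  | _ i ih =>
    have h1 := newton (newtonSum p c) i
    have h2 : newtonSum p c (i : ZMod p) = ∑ k ∈ range (i + 1), i.choose k • c k := by
      rw [newtonSum, ZMod.val_natCast_of_lt hi]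
      refine (Finset.sum_subset (range_subset_range.2 hi) fun k _ hk => ?_).symm
      rw [Nat.choose_eq_zero_of_lt (by simpa using hk), zero_smul]
    rw [h2, Finset.sum_range_succ, Finset.sum_range_succ] at h1
    have h3 : ∑ k ∈ range i, i.choose k • c k =
        ∑ k ∈ range i, i.choose k • (Δ_[(1 : ZMod p)])^[k] (newtonSum p c) 0 :=
      Finset.sum_congr rfl fun k hk => by
        rw [ih k (mem_range.1 hk) ((mem_range.1 hk).trans hi)]
    rw [h3] at h1
    simpa using (add_left_cancel h1).symm

end Newton

section Coeffs
variable {a b M N : ℕ} [NeZero M] [NeZero N]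

/-- The Newton coefficients attached to an element of `U(1) × (Z_M)^a × (Z_N)^b`: index `0` carries
the phase, indices `1, …, a` carry `M`-th roots of unity, indices `a + 1, …, a + b` carry `N`-th
roots of unity, and all later coefficients are trivial. -/
noncomputable def coeffs
    (x : Circle × (Fin a → Multiplicative (ZMod M)) × (Fin b → Multiplicative (ZMod N))) :
    ℕ → Additive Circle
  | 0 => Additive.ofMul x.1
  | i + 1 =>
    if h : i < a then Additive.ofMul (ZMod.toCircle (x.2.1 ⟨i, h⟩).toAdd)
    else if h : i - a < b then Additive.ofMul (ZMod.toCircle (x.2.2 ⟨i - a, h⟩).toAdd)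
    else 0

lemma coeffs_mul
    (x y : Circle × (Fin a → Multiplicative (ZMod M)) × (Fin b → Multiplicative (ZMod N)))
    (i : ℕ) : coeffs (x * y) i = coeffs x i + coeffs y i := by
  cases i with
  | zero => rfl
  | succ i =>
    simp only [coeffs]
    split_ifs <;> simp [AddChar.map_add_eq_mul]

lemma coeffs_phase (z : Circle) (i : ℕ) :
    coeffs ((z, 1, 1) : Circle × (Fin a → Multiplicative (ZMod M)) ×
      (Fin b → Multiplicative (ZMod N))) (i + 1) = 0 := by
  simp [coeffs]

lemma coeffs_injective
    {x y : Circle × (Fin a → Multiplicative (ZMod M)) × (Fin b → Multiplicative (ZMod N))}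
    (h : ∀ i < a + b + 1, coeffs x i = coeffs y i) : x = y := by
  obtain ⟨z, v, w⟩ := x
  obtain ⟨z', v', w'⟩ := y
  refine Prod.ext (h 0 (by omega)) (Prod.ext (funext fun i => ?_) (funext fun i => ?_))
  · have := h (i + 1) (by omega)
    simp only [coeffs, i.2, dif_pos] at this
    exact ZMod.injective_toCircle this
  · have := h (a + i + 1) (by omega)
    have h1 : ¬ (a + (i : ℕ) < a) := by omega
    simp only [coeffs, h1, dif_neg, not_false_eq_true, Nat.add_sub_cancel_left, i.2, dif_pos]
      at this
    exact ZMod.injective_toCircle this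

lemma smul_toCircle (x : ZMod N) : N • Additive.ofMul (ZMod.toCircle x) = 0 := by
  rw [← ofMul_pow, ← AddChar.map_nsmul_eq_pow]
  simp

/-- A sequence comes from `coeffs` exactly when it satisfies the evident torsion conditions. -/
lemma exists_coeffs_iff (c : ℕ → Additive Circle) :
    (∃ x : Circle × (Fin a → Multiplicative (ZMod M)) × (Fin b → Multiplicative (ZMod N)),
      ∀ i < a + b + 1, coeffs x i = c i) ↔
    (∀ i, 1 ≤ i → i ≤ a → M • c i = 0) ∧ (∀ i, a < i → i < a + b + 1 → N • c i = 0) := by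
  constructor
  · rintro ⟨x, hx⟩
    constructor
    · intro i hi hia
      obtain ⟨j, rfl⟩ := Nat.exists_eq_add_of_le' hi
      rw [← hx _ (by omega), coeffs, dif_pos (by omega), smul_toCircle]
    · intro i hi hib
      obtain ⟨j, rfl⟩ := Nat.exists_eq_add_of_le' (Nat.one_le_of_lt hi)
      rw [← hx _ hib, coeffs, dif_neg (by omega), dif_pos (by omega), smul_toCircle]
  · rintro ⟨h1, h2⟩
    have e1 : ∀ i : Fin a, ∃ v : ZMod M, ZMod.toCircle v = (c (i + 1)).toMul := fun i =>
      exists_toCircle (h1 (i + 1) (by omega) (by omega))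
    have e2 : ∀ i : Fin b, ∃ v : ZMod N, ZMod.toCircle v = (c (a + i + 1)).toMul := fun i =>
      exists_toCircle (h2 (a + i + 1) (by omega) (by omega))
    choose v hv using e1
    choose w hw using e2
    refine ⟨((c 0).toMul, fun i => Multiplicative.ofAdd (v i),
      fun i => Multiplicative.ofAdd (w i)), fun i hi => ?_⟩
    cases i with
    | zero => rfl
    | succ i =>
      simp only [coeffs, toAdd_ofAdd, hv, hw, ofMul_toMul]
      split_ifs with h h'
      · rfl
      · rw [Nat.add_sub_cancel' (by omega)]
      · omega

end Coeffs
end DiagClifford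

open DiagClifford fwdDiff

/-- For a single qudit of prime dimension `p`, any `m > 1` and any `a`
with `1 ≤ a ≤ p-1`, the group `C^{(p-1)(m-1)+a}_d` of diagonal gates in level
`(p-1)(m-1)+a` of the Clifford hierarchy is isomorphic to
`U(1) × (Z_{p^m})^a × (Z_{p^{m-1}})^{p-a-1}`, the `U(1)` factor corresponding to global
phases.  The isomorphism is expressed as a multiplicative bijection onto
`C^{(p-1)(m-1)+a}_d` sending `(z, 1, 1)` to `z • I`. -/
theorem diagonal_clifford_iso_general (p m a : ℕ) [NeZero p] (hp : p.Prime) (hm : 1 < m)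
    (ha1 : 1 ≤ a) (ha2 : a ≤ p - 1) :
    ∃ f : Circle × (Fin a → Multiplicative (ZMod (p ^ m))) ×
        (Fin (p - a - 1) → Multiplicative (ZMod (p ^ (m - 1)))) →
        Matrix (ZMod p) (ZMod p) ℂ,
      Function.Injective f ∧ Set.range f = CliffD1 p ((p - 1) * (m - 1) + a) ∧
      (∀ x y, f (x * y) = f x * f y) ∧
      (∀ z : Circle, f (z, 1, 1) = (z : ℂ) • (1 : Matrix (ZMod p) (ZMod p) ℂ)) := by
  have : NeZero (p ^ m) := ⟨pow_ne_zero _ hp.ne_zero⟩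
  have : NeZero (p ^ (m - 1)) := ⟨pow_ne_zero _ hp.ne_zero⟩
  have h2 := hp.two_le
  have hpab : a + (p - a - 1) + 1 = p := by omega
  have hk : ∃ k, (p - 1) * (m - 1) + a = k + 2 := by
    have : 1 ≤ (p - 1) * (m - 1) := Nat.mul_pos (by omega) (by omega)
    exact ⟨(p - 1) * (m - 1) + a - 2, by omega⟩
  obtain ⟨k, hk⟩ := hk
  -- The level is at least `2`, and its diagonal gates are cut out by torsion of `(Δ^i u) 0`.
  have hmem : ∀ U, U ∈ CliffD1 p ((p - 1) * (m - 1) + a) ↔ ∃ u : ZMod p → Additive Circle,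
      ((∀ i, 1 ≤ i → i ≤ a → p ^ m • (Δ_[(1 : ZMod p)])^[i] u 0 = 0) ∧
        (∀ i, a < i → i < a + (p - a - 1) + 1 →
          p ^ (m - 1) • (Δ_[(1 : ZMod p)])^[i] u 0 = 0)) ∧ U = monoMat u 0 := by
    intro U
    rw [hk, mem_cliffD1_iff, show k + 3 = (p - 1) * (m - 1) + a + 1 by omega]
    simp only [iter_eq_zero_iff hp (show a + 1 ≤ p by omega), hpab, Nat.sub_add_cancel hm.le]
  refine ⟨fun x => monoMat (newtonSum p (coeffs x)) 0, ?_, ?_, ?_, ?_⟩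
  · intro x y hxy
    apply coeffs_injective
    intro i hi
    rw [hpab] at hi
    rw [← iter_newtonSum (coeffs x) hi, ← iter_newtonSum (coeffs y) hi, (monoMat_inj hxy).1]
  · ext U
    rw [hmem]
    constructor
    · rintro ⟨x, rfl⟩
      refine ⟨_, exists_coeffs_iff _ |>.1 ⟨x, fun i hi => ?_⟩, rfl⟩
      rw [iter_newtonSum _ (by omega)]
    · rintro ⟨u, hu, rfl⟩
      obtain ⟨x, hx⟩ := (exists_coeffs_iff fun i => (Δ_[(1 : ZMod p)])^[i] u 0).2 hu
      refine ⟨x, ?_⟩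
      change monoMat _ 0 = _
      congr 1
      rw [← newtonSum_iter u]
      funext r
      refine Finset.sum_congr rfl fun i hi => ?_
      rw [hx i (by rw [hpab]; exact Finset.mem_range.1 hi)]
  · intro x y
    rw [monoMat_mul, add_zero]
    refine congrArg (fun u => monoMat u 0) (funext fun r => ?_)
    simp only [newtonSum, coeffs_mul, smul_add, Finset.sum_add_distrib, sub_zero]
  · intro z
    rw [← monoMat_zero, smul_monoMat]
    refine congrArg (fun u => monoMat u 0) (funext fun r => ?_)
    rw [newtonSum, Finset.sum_eq_single 0]
    · simp [coeffs]
    · intro i _ hi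
      obtain ⟨j, rfl⟩ := Nat.exists_eq_succ_of_ne_zero hi
      rw [coeffs_phase, smul_zero]
    · intro h
      exact absurd (Finset.mem_range.2 hp.pos) h
end
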